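/- arXiv:1309.1366 — 3 statements merged into one kernel-verified Lean document; each statement's English description precedes it below -/
import Mathlib

section
/- Let μ be a (K,d)-doubling Borel measure on a metric space (M,ρ) and let σ ∈ (d,∞). Then for all s, t ∈ (0,∞) and all x, y ∈ M: ∫_M D_{s,σ}(x,z) D_{t,σ}(z,y) dμ(z) ≤ (K²·2^{d+σ+1}/(1 − 2^{d−σ})) · max{(s/t)^d, (t/s)^d} · D_{max(s,t),σ}(x,y). -/
open MeasureTheory Metric
open scoped ENNReal

/-- The kernel `D_{δ,σ}(x,y) := (μ(B(x,δ)) μ(B(y,δ)))^{-1/2} (1 + δ⁻¹ ρ(x,y))^{-σ}`. -/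
noncomputable def Dkernel {M : Type*} [MetricSpace M] [MeasurableSpace M]
    (μ : Measure M) (δ σ : ℝ) (x y : M) : ℝ≥0∞ :=
  (μ (ball x δ) * μ (ball y δ)) ^ (-(1/2 : ℝ)) *
    ENNReal.ofReal ((1 + dist x y / δ) ^ (-σ))

theorem aux_beta (C : ℝ) : ∃ β : ℝ, 2 ≤ β ∧ β ≤ 3 ∧
    ∀ k : ℕ, β * 2 ^ k ≤ 0.45 * C ∨ 0.55 * C ≤ β * 2 ^ k := by
  by_contra h
  push Not at h
  obtain ⟨k, hk1, hk2⟩ := h 2 le_rfl (by norm_num)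
  obtain ⟨l, hl1, hl2⟩ := h 3 (by norm_num) le_rfl
  have pl : (0:ℝ) < 2 ^ l := by positivity
  rcases lt_trichotomy k l with hlt | heq | hgt
  · have : (2:ℝ) ^ (k + 1) ≤ 2 ^ l := pow_le_pow_right₀ (by norm_num) hlt
    rw [pow_succ] at this
    linarith
  · subst heq
    linarith
  · have : (2:ℝ) ^ (l + 1) ≤ 2 ^ k := pow_le_pow_right₀ (by norm_num) hgt
    rw [pow_succ] at this
    linarith

theorem aux_geom (C u B b : ℝ) (hC : 1 ≤ C) (hu : 1 ≤ u) (hB : u ≤ B) (hs : C ≤ u + B)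
    (hb1 : b ≤ u) (hb : b ≤ 0.45 * C ∨ 0.55 * C ≤ b) :
    (2 * b + u) * C ≤ 5.6 * (u * B) := by
  rcases hb with hb | hb
  · rcases le_or_gt (C / 2) u with h | h
    · nlinarith [mul_nonneg (sub_nonneg.2 hB) (by linarith : (0:ℝ) ≤ u)]
    · have h1 : u * (C - u) ≤ u * B := mul_le_mul_of_nonneg_left (by linarith) (by linarith)
      rcases le_or_gt u (0.45 * C) with h2 | h2
      · nlinarith [mul_nonneg (sub_nonneg.2 hb1) (by linarith : (0:ℝ) ≤ C)]
      · nlinarith [mul_nonneg (sub_nonneg.2 hb) (by linarith : (0:ℝ) ≤ C),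
          mul_nonneg (sub_nonneg.2 h.le) (sub_nonneg.2 h2.le),
          mul_nonneg (sub_nonneg.2 h2.le) (by linarith : (0:ℝ) ≤ C)]
  · have h1 : u * (0.55 * C) ≤ u * B := mul_le_mul_of_nonneg_left (by linarith) (by linarith)
    nlinarith [mul_nonneg (sub_nonneg.2 hb1) (by linarith : (0:ℝ) ≤ C)]

/-- selection of the shell -/
theorem aux_shell (C u B β : ℝ) (hC : 1 ≤ C) (hu : 1 ≤ u) (hB : u ≤ B) (hs : C ≤ u + B)
    (hβ2 : 2 ≤ β) (hβ3 : β ≤ 3)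
    (hβ : ∀ k : ℕ, β * 2 ^ k ≤ 0.45 * C ∨ 0.55 * C ≤ β * 2 ^ k) :
    ∃ k : ℕ, u < β * 2 ^ k ∧ 1 ≤ β * 2 ^ k - 2 + u ∧ 2 ^ k ≤ 2 * (u * B) / C ∧
      β * 2 ^ k - 2 + u ≤ 2.8 * (2 * (u * B) / C) := by
  have C0 : 0 < C := by linarith
  have hX : u ≤ 2 * (u * B) / C := by
    rw [le_div_iff₀ C0]
    nlinarith
  have hex : ∃ k : ℕ, u < β * 2 ^ k := by
    obtain ⟨n, hn⟩ := pow_unbounded_of_one_lt u (by norm_num : (1:ℝ) < 2)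
    refine ⟨n, hn.trans_le ?_⟩
    have : (0:ℝ) < 2 ^ n := by positivity
    nlinarith
  classical
  have hk := Nat.find_spec hex
  have hmin := fun m => @Nat.find_min _ _ hex m
  generalize Nat.find hex = k at hk hmin
  have hk1 : (1:ℝ) ≤ 2 ^ k := one_le_pow₀ (by norm_num)
  refine ⟨k, hk, by nlinarith, ?_, ?_⟩
  · cases k with
    | zero => simp; linarith
    | succ m =>
      have h := hmin m (Nat.lt_succ_self m)
      push Not at h
      have : (0:ℝ) < 2 ^ m := by positivity
      rw [pow_succ]
      nlinarith
  · cases k with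
    | zero => simp only [pow_zero]; linarith
    | succ m =>
      have h := hmin m (Nat.lt_succ_self m)
      push Not at h
      have g := aux_geom C u B (β * 2 ^ m) hC hu hB hs h (hβ m)
      have : 2 * (β * 2 ^ m) + u ≤ 2.8 * (2 * (u * B) / C) := by
        rw [← mul_div_assoc, le_div_iff₀ C0]
        linarith
      rw [pow_succ]
      linarith

theorem aux_half (p q c : ℝ) (hp : 0 < p) (hq : 0 < q) (hc : 0 < c) (h : q ≤ c * p) :
    p ^ (-(1/2:ℝ)) ≤ c ^ (1/2:ℝ) * q ^ (-(1/2:ℝ)) := by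
  rw [Real.rpow_neg hp.le, Real.rpow_neg hq.le, ← div_eq_mul_inv, inv_eq_one_div,
    div_le_div_iff₀ (by positivity) (by positivity), one_mul, ← Real.mul_rpow hc.le hp.le]
  exact Real.rpow_le_rpow hq.le h (by norm_num)

theorem aux_decay (d σ C u B N : ℝ) (k : ℕ) (hd : 0 < d) (hσ : d < σ) (hC : 1 ≤ C)
    (hu : 1 ≤ u) (hB : 1 ≤ B) (hN : 1 ≤ N) (hk : 2 ^ k ≤ 2 * (u * B) / C)
    (hNX : N ≤ 2.8 * (2 * (u * B) / C)) :
    N ^ d * (u ^ (-σ) * B ^ (-σ)) ≤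
      (2:ℝ) ^ (3 * d / 2) * 2 ^ σ * C ^ (-σ) * ((2:ℝ) ^ (d - σ)) ^ k := by
  have C0 : 0 < C := by linarith
  have u0 : 0 < u := by linarith
  have B0 : 0 < B := by linarith
  set X := 2 * (u * B) / C with hXdef
  have X0 : 0 < X := by positivity
  have huB : u * B = X * C * 2⁻¹ := by rw [hXdef]; field_simp
  have h1 : u ^ (-σ) * B ^ (-σ) = X ^ (-σ) * C ^ (-σ) * 2 ^ σ := by
    rw [← Real.mul_rpow u0.le B0.le, huB, Real.mul_rpow (by positivity) (by norm_num),
      Real.mul_rpow X0.le C0.le, Real.rpow_neg (by norm_num : (0:ℝ) ≤ 2⁻¹),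
      Real.inv_rpow (by norm_num), inv_inv]
  have h28 : (2.8:ℝ) ≤ 2 ^ (3/2:ℝ) := by
    have : (2:ℝ) ^ (3/2:ℝ) = 2 * Real.sqrt 2 := by
      rw [show (3/2:ℝ) = 1 + 1/2 by norm_num, Real.rpow_add (by norm_num), Real.rpow_one,
        Real.sqrt_eq_rpow]
    rw [this]
    have : (1.4:ℝ) ≤ Real.sqrt 2 := Real.le_sqrt_of_sq_le (by norm_num)
    linarith
  have h2 : N ^ d ≤ 2 ^ (3 * d / 2) * X ^ d := by
    have : (2:ℝ) ^ (3 * d / 2) = (2 ^ (3/2:ℝ)) ^ d := by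
      rw [← Real.rpow_mul (by norm_num)]; congr 1; ring
    rw [this, ← Real.mul_rpow (by positivity) X0.le]
    exact Real.rpow_le_rpow (by linarith) (hNX.trans (by gcongr)) hd.le
  have h3 : X ^ d * X ^ (-σ) ≤ ((2:ℝ) ^ (d - σ)) ^ k := by
    rw [← Real.rpow_add X0, ← Real.rpow_natCast, ← Real.rpow_mul (by norm_num),
      mul_comm (d - σ), Real.rpow_mul (by norm_num), Real.rpow_natCast, ← sub_eq_add_neg]
    exact Real.rpow_le_rpow_of_nonpos (by positivity) hk (by linarith)
  calc N ^ d * (u ^ (-σ) * B ^ (-σ))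
      ≤ (2 ^ (3 * d / 2) * X ^ d) * (X ^ (-σ) * C ^ (-σ) * 2 ^ σ) := by
        rw [h1]; gcongr
    _ = 2 ^ (3 * d / 2) * 2 ^ σ * C ^ (-σ) * (X ^ d * X ^ (-σ)) := by ring
    _ ≤ _ := by gcongr

/-- the pointwise bound in real numbers -/
theorem aux_real (K d σ T C A A' B N W vxs vzs vzt vyt vxt : ℝ) (k : ℕ)
    (hd : 0 < d) (hK : K = 2 ^ d) (hσ : d < σ)
    (hT : 1 ≤ T) (hC : 1 ≤ C) (hA : 1 ≤ A) (hA' : A ≤ A') (hB : 1 ≤ B) (hN : 1 ≤ N)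
    (hk : 2 ^ k ≤ 2 * (A * B) / C) (hNX : N ≤ 2.8 * (2 * (A * B) / C))
    (hW : 0 < W) (h1 : 0 < vxs) (h2 : 0 < vzs) (h3 : 0 < vzt) (h4 : 0 < vyt) (h5 : 0 < vxt)
    (hx : vxt ≤ K * T ^ d * vxs) (hzt : W ≤ K * N ^ d * vzt)
    (hzs : W ≤ K * (N * T) ^ d * vzs) :
    ((vxs * vzs) ^ (-(1/2:ℝ)) * A' ^ (-σ)) * ((vzt * vyt) ^ (-(1/2:ℝ)) * B ^ (-σ)) ≤
      (K ^ 2 * 2 ^ (d + σ) * T ^ d * ((vxt * vyt) ^ (-(1/2:ℝ)) * C ^ (-σ))) *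
        ((2:ℝ) ^ (d - σ)) ^ k * W⁻¹ := by
  have K0 : 0 < K := by rw [hK]; positivity
  have T0 : 0 < T := by linarith
  have N0 : 0 < N := by linarith
  have A0 : 0 < A := by linarith
  have B0 : 0 < B := by linarith
  have C0 : 0 < C := by linarith
  have e1 := aux_half vxs vxt (K * T ^ d) h1 h5 (by positivity) hx
  have e2 := aux_half (vzs * vzt) (W ^ 2) (K * (N * T) ^ d * (K * N ^ d))
    (by positivity) (by positivity) (by positivity) (by
      calc W ^ 2 = W * W := by ring
        _ ≤ (K * (N * T) ^ d * vzs) * (K * N ^ d * vzt) := by gcongr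
        _ = _ := by ring)
  have e3 : (W ^ 2) ^ (-(1/2:ℝ)) = W⁻¹ := by
    rw [Real.rpow_neg (by positivity), ← Real.sqrt_eq_rpow, Real.sqrt_sq hW.le]
  have e4 : (K * (N * T) ^ d * (K * N ^ d)) ^ (1/2:ℝ) = K * N ^ d * (T ^ d) ^ (1/2:ℝ) := by
    rw [Real.mul_rpow N0.le T0.le,
      show K * (N ^ d * T ^ d) * (K * N ^ d) = (K * N ^ d) ^ 2 * T ^ d by ring,
      Real.mul_rpow (by positivity) (by positivity), ← Real.sqrt_eq_rpow,
      Real.sqrt_sq (by positivity)]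
  rw [e3, e4] at e2
  have e5 : (K * T ^ d) ^ (1/2:ℝ) = K ^ (1/2:ℝ) * (T ^ d) ^ (1/2:ℝ) :=
    Real.mul_rpow K0.le (by positivity)
  rw [e5] at e1
  have e6 : (T ^ d) ^ (1/2:ℝ) * (T ^ d) ^ (1/2:ℝ) = T ^ d := by
    rw [← Real.rpow_add (by positivity)]; norm_num
  have e7 := aux_decay d σ C A B N k hd hσ hC hA hB hN hk hNX
  have e8 : A' ^ (-σ) ≤ A ^ (-σ) := Real.rpow_le_rpow_of_nonpos A0 hA' (by linarith)
  have A0' : 0 < A' := by linarith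
  have e9 : K ^ (1/2:ℝ) * K * ((2:ℝ) ^ (3 * d / 2) * 2 ^ σ) = K ^ 2 * 2 ^ (d + σ) := by
    rw [hK, ← Real.rpow_natCast, ← Real.rpow_mul (by norm_num), ← Real.rpow_mul (by norm_num),
      ← Real.rpow_add (by norm_num), ← Real.rpow_add (by norm_num),
      ← Real.rpow_add (by norm_num), ← Real.rpow_add (by norm_num)]
    congr 1
    push_cast
    ring
  have s1 : ((vxs * vzs) ^ (-(1/2:ℝ)) * A' ^ (-σ)) * ((vzt * vyt) ^ (-(1/2:ℝ)) * B ^ (-σ))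
      = vxs ^ (-(1/2:ℝ)) * (vzs * vzt) ^ (-(1/2:ℝ)) * vyt ^ (-(1/2:ℝ)) *
        (A' ^ (-σ) * B ^ (-σ)) := by
    rw [Real.mul_rpow h1.le h2.le, Real.mul_rpow h3.le h4.le, Real.mul_rpow h2.le h3.le]
    ring
  rw [s1]
  calc vxs ^ (-(1/2:ℝ)) * (vzs * vzt) ^ (-(1/2:ℝ)) * vyt ^ (-(1/2:ℝ)) *
        (A' ^ (-σ) * B ^ (-σ))
      ≤ (K ^ (1/2:ℝ) * (T ^ d) ^ (1/2:ℝ) * vxt ^ (-(1/2:ℝ))) *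
        (K * N ^ d * (T ^ d) ^ (1/2:ℝ) * W⁻¹) * vyt ^ (-(1/2:ℝ)) *
        (A ^ (-σ) * B ^ (-σ)) := by gcongr
    _ = K ^ (1/2:ℝ) * K * T ^ d * (vxt ^ (-(1/2:ℝ)) * vyt ^ (-(1/2:ℝ))) * W⁻¹ *
        (N ^ d * (A ^ (-σ) * B ^ (-σ))) := by
        linear_combination (K ^ (1/2:ℝ) * K * (vxt ^ (-(1/2:ℝ)) * vyt ^ (-(1/2:ℝ))) * W⁻¹ *
          (N ^ d * (A ^ (-σ) * B ^ (-σ)))) * e6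
    _ ≤ K ^ (1/2:ℝ) * K * T ^ d * (vxt ^ (-(1/2:ℝ)) * vyt ^ (-(1/2:ℝ))) * W⁻¹ *
        ((2:ℝ) ^ (3 * d / 2) * 2 ^ σ * C ^ (-σ) * ((2:ℝ) ^ (d - σ)) ^ k) := by gcongr
    _ = _ := by
      rw [Real.mul_rpow h5.le h4.le, ← e9]; ring

theorem aux_kernel {M : Type*} [MetricSpace M] [MeasurableSpace M]
    (μ : Measure M)
    (hball : ∀ (x : M) (r : ℝ), 0 < r → 0 < μ (ball x r) ∧ μ (ball x r) < ⊤)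
    (δ σ : ℝ) (hδ : 0 < δ) (x y : M) :
    Dkernel μ δ σ x y = ENNReal.ofReal
      (((μ (ball x δ)).toReal * (μ (ball y δ)).toReal) ^ (-(1/2:ℝ)) *
        (1 + dist x y / δ) ^ (-σ)) := by
  have hx := hball x δ hδ
  have hy := hball y δ hδ
  have px := ENNReal.toReal_pos hx.1.ne' hx.2.ne
  have py := ENNReal.toReal_pos hy.1.ne' hy.2.ne
  rw [Dkernel, ENNReal.ofReal_mul (by positivity), 
    ← ENNReal.ofReal_rpow_of_pos (mul_pos px py), ENNReal.ofReal_mul px.le, ENNReal.ofReal_toReal hx.2.ne, ENNReal.ofReal_toReal hy.2.ne]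

theorem aux_symm {M : Type*} [MetricSpace M] [MeasurableSpace M]
    (μ : Measure M) (δ σ : ℝ) (x y : M) : Dkernel μ δ σ x y = Dkernel μ δ σ y x := by
  rw [Dkernel, Dkernel, mul_comm (μ (ball x δ)), dist_comm]

theorem aux_main {M : Type*} [MetricSpace M] [MeasurableSpace M] [BorelSpace M]
    (μ : Measure M)
    (hball : ∀ (x : M) (r : ℝ), 0 < r → 0 < μ (ball x r) ∧ μ (ball x r) < ⊤)
    (K d : ℝ) (hd : 0 < d) (hK : K = 2 ^ d)
    (hdoub : ∀ (x : M) (r lam : ℝ), 0 < r → 1 ≤ lam →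
      μ (ball x (lam * r)) ≤ ENNReal.ofReal (K * lam ^ d) * μ (ball x r))
    (σ : ℝ) (hσ : d < σ) (s t : ℝ) (hs : 0 < s) (hst : s ≤ t) (x y : M) :
      (∫⁻ z, Dkernel μ s σ x z * Dkernel μ t σ z y ∂μ) ≤
        ENNReal.ofReal (K ^ 2 * (2:ℝ) ^ (d + σ + 1) / (1 - (2:ℝ) ^ (d - σ)) * (t / s) ^ d) *
          Dkernel μ t σ x y := by
  have ht : 0 < t := hs.trans_le hst
  have K0 : 0 < K := by rw [hK]; positivity
  set v : M → ℝ → ℝ := fun p r => (μ (ball p r)).toReal with hv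
  have v0 : ∀ p r, 0 < r → 0 < v p r := fun p r hr =>
    ENNReal.toReal_pos (hball p r hr).1.ne' (hball p r hr).2.ne
  have vmono : ∀ p q r r', 0 < r' → ball p r ⊆ ball q r' → v p r ≤ v q r' :=
    fun p q r r' hr h => ENNReal.toReal_mono (hball q r' hr).2.ne (measure_mono h)
  have vdoub : ∀ (p : M) (r lam : ℝ), 0 < r → 1 ≤ lam →
      v p (lam * r) ≤ K * lam ^ d * v p r := by
    intro p r lam hr hl
    have h := ENNReal.toReal_mono
      (ENNReal.mul_lt_top ENNReal.ofReal_lt_top (hball p r hr).2).ne (hdoub p r lam hr hl)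
    rwa [ENNReal.toReal_mul, ENNReal.toReal_ofReal (by positivity)] at h
  set T := t / s with hTdef
  have hT : 1 ≤ T := (one_le_div hs).2 hst
  have hTs : T * s = t := by rw [hTdef]; field_simp
  set C := 1 + dist x y / t with hCdef
  have hC : 1 ≤ C := by
    have : 0 ≤ dist x y / t := by positivity
    linarith
  obtain ⟨β, hβ2, hβ3, hβ⟩ := aux_beta C
  set R : ℕ → ℝ := fun k => (β * 2 ^ k - 1) * t with hRdef
  have R0 : ∀ k, 0 < R k := by
    intro k
    have : (1:ℝ) ≤ 2 ^ k := one_le_pow₀ (by norm_num)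
    exact mul_pos (by nlinarith) ht
  set q : ℝ := 2 ^ (d - σ) with hq
  have q0 : 0 < q := by positivity
  have q1 : q < 1 := Real.rpow_lt_one_of_one_lt_of_neg (by norm_num) (by linarith)
  set G : ℝ := K ^ 2 * 2 ^ (d + σ) * T ^ d * ((v x t * v y t) ^ (-(1/2:ℝ)) * C ^ (-σ)) with hG
  have pxt := v0 x t ht
  have pyt := v0 y t ht
  have G0 : 0 ≤ G := by positivity
  set F : M → ℕ → M → ℝ≥0∞ := fun p k =>
    (ball p (R k)).indicator (fun _ => ENNReal.ofReal (G * q ^ k) * (μ (ball p (R k)))⁻¹) with hF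
  have key : ∀ z p, (p = x ∨ p = y) →
      1 + dist p z / t ≤ 2 * ((1 + dist x z / t) * (1 + dist z y / t)) / (1 + dist p z / t) / 2 →
      Dkernel μ s σ x z * Dkernel μ t σ z y ≤ ∑' k, F p k z := by
    intro z p hp hle
    set A := 1 + dist x z / t with hA
    set B := 1 + dist z y / t with hB
    set u := 1 + dist p z / t with hu
    have A1 : 1 ≤ A := by
      have : 0 ≤ dist x z / t := by positivity
      linarith
    have B1 : 1 ≤ B := by
      have : 0 ≤ dist z y / t := by positivity
      linarith
    have u1 : 1 ≤ u := by
      have : 0 ≤ dist p z / t := by positivity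
      linarith
    have hCAB : C ≤ A + B := by
      have : dist x y / t ≤ dist x z / t + dist z y / t := by
        rw [← add_div]; gcongr; exact dist_triangle _ _ _
      linarith
    set B' := 2 * (A * B) / u / 2 with hB'
    have huB : u * B' = A * B := by rw [hB']; field_simp
    have hsum : C ≤ u + B' := by
      rcases hp with rfl | rfl
      · have : u = A := rfl
        have : B' = B := by
          rw [hB', this]; field_simp
        linarith
      · have : u = B := by rw [hu, hB, dist_comm]
        have : B' = A := by
          rw [hB', this]; field_simp
        linarith
    obtain ⟨k, hk1, hk2, hk3, hk4⟩ := aux_shell C u B' β hC u1 hle hsum hβ2 hβ3 hβ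
    rw [huB] at hk3 hk4
    refine le_trans ?_ (ENNReal.le_tsum k)
    have hdist : dist p z = (u - 1) * t := by rw [hu]; field_simp; ring
    have hmem : z ∈ ball p (R k) := by
      rw [mem_ball, dist_comm, hdist, hRdef]
      exact mul_lt_mul_of_pos_right (by linarith) ht
    simp only [hF]
    rw [Set.indicator_of_mem hmem, aux_kernel μ hball s σ hs, aux_kernel μ hball t σ ht,
      ← ENNReal.ofReal_mul (by positivity),
      ← ENNReal.ofReal_toReal (hball p (R k) (R0 k)).2.ne,
      ← ENNReal.ofReal_inv_of_pos (v0 p _ (R0 k)), ← ENNReal.ofReal_mul (by positivity)]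
    apply ENNReal.ofReal_le_ofReal
    set N := β * 2 ^ k - 2 + u with hN
    have hsub : ball p (R k) ⊆ ball z (N * t) := by
      apply ball_subset_ball'
      rw [hdist, hRdef, hN]
      apply le_of_eq
      ring
    have hW : v p (R k) ≤ v z (N * t) := vmono _ _ _ _ (by positivity) hsub
    refine aux_real K d σ T C A (1 + dist x z / s) B N (v p (R k)) (v x s) (v z s) (v z t)
      (v y t) (v x t) k hd hK hσ hT hC A1 ?_ B1 hk2 hk3 hk4 (v0 _ _ (R0 k)) (v0 _ _ hs)
      (v0 _ _ hs) (v0 _ _ ht) pyt pxt ?_ ?_ ?_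
    · rw [hA]; gcongr
    · have := vdoub x s T hs hT
      rwa [hTs] at this
    · exact hW.trans (vdoub z t N ht hk2)
    · have := vdoub z s (N * T) hs (one_le_mul_of_one_le_of_one_le hk2 hT)
      rw [mul_assoc, hTs] at this
      exact hW.trans this
  have hpt : ∀ z, Dkernel μ s σ x z * Dkernel μ t σ z y ≤ (∑' k, F x k z) + ∑' k, F y k z := by
    intro z
    have A1 : 0 < 1 + dist x z / t := by positivity
    have B1 : 0 < 1 + dist z y / t := by positivity
    rcases le_total (1 + dist x z / t) (1 + dist z y / t) with h | h
    · refine (key z x (Or.inl rfl) ?_).trans le_self_add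
      rwa [mul_div_assoc, mul_div_cancel_left₀ _ A1.ne', mul_div_cancel_left₀ _ two_ne_zero]
    · refine (key z y (Or.inr rfl) ?_).trans le_add_self
      rw [dist_comm y z]
      rwa [mul_div_assoc, mul_div_cancel_right₀ _ B1.ne', mul_div_cancel_left₀ _ two_ne_zero]
  have hFm : ∀ p k, Measurable (F p k) := fun p k =>
    measurable_const.indicator measurableSet_ball
  have hFi : ∀ p, ∫⁻ z, ∑' k, F p k z ∂μ = ENNReal.ofReal (G * (1 - q)⁻¹) := by
    intro p
    rw [lintegral_tsum (fun k => (hFm p k).aemeasurable)]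
    have : ∀ k, ∫⁻ z, F p k z ∂μ = ENNReal.ofReal (G * q ^ k) := by
      intro k
      simp only [hF]
      rw [lintegral_indicator_const measurableSet_ball, mul_assoc,
        ENNReal.inv_mul_cancel (hball p _ (R0 k)).1.ne' (hball p _ (R0 k)).2.ne, mul_one]
    simp_rw [this]
    rw [← ENNReal.ofReal_tsum_of_nonneg (fun k => by positivity)
      ((summable_geometric_of_lt_one q0.le q1).mul_left G), tsum_mul_left,
      tsum_geometric_of_lt_one q0.le q1]
  calc (∫⁻ z, Dkernel μ s σ x z * Dkernel μ t σ z y ∂μ)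
      ≤ ∫⁻ z, (∑' k, F x k z) + ∑' k, F y k z ∂μ := lintegral_mono hpt
    _ = ENNReal.ofReal (G * (1 - q)⁻¹) + ENNReal.ofReal (G * (1 - q)⁻¹) := by
      rw [lintegral_add_left (Measurable.tsum (fun k => hFm x k)), hFi, hFi]
    _ = _ := by
      have : 0 < 1 - q := by linarith
      have hk : Dkernel μ t σ x y = ENNReal.ofReal ((v x t * v y t) ^ (-(1/2:ℝ)) * C ^ (-σ)) :=
        aux_kernel μ hball t σ ht x y
      rw [← ENNReal.ofReal_add (by positivity) (by positivity), hk,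
        ← ENNReal.ofReal_mul (by positivity), Real.rpow_add_one (by norm_num)]
      congr 1
      rw [hG, div_eq_mul_inv]
      ring

theorem stmt_3 {M : Type*} [MetricSpace M] [MeasurableSpace M] [BorelSpace M]
    (μ : Measure M)
    (hball : ∀ (x : M) (r : ℝ), 0 < r → 0 < μ (ball x r) ∧ μ (ball x r) < ⊤)
    (K d : ℝ) (hK : 1 < K) (hd : d = Real.logb 2 K)
    (hdoub : ∀ (x : M) (r lam : ℝ), 0 < r → 1 ≤ lam →
      μ (ball x (lam * r)) ≤ ENNReal.ofReal (K * lam ^ d) * μ (ball x r))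
    (σ : ℝ) (hσ : d < σ) :
    ∀ (s t : ℝ), 0 < s → 0 < t → ∀ x y : M,
      (∫⁻ z, Dkernel μ s σ x z * Dkernel μ t σ z y ∂μ) ≤
        ENNReal.ofReal (K ^ 2 * (2:ℝ) ^ (d + σ + 1) / (1 - (2:ℝ) ^ (d - σ)) *
            max ((s / t) ^ d) ((t / s) ^ d)) *
          Dkernel μ (max s t) σ x y := by
  have d0 : 0 < d := by rw [hd]; exact Real.logb_pos (by norm_num) hK
  have hKd : K = 2 ^ d := by
    rw [hd, Real.rpow_logb (by norm_num) (by norm_num) (by linarith)]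
  have q1 : (2:ℝ) ^ (d - σ) < 1 :=
    Real.rpow_lt_one_of_one_lt_of_neg (by norm_num) (by linarith)
  have hc : 0 ≤ K ^ 2 * (2:ℝ) ^ (d + σ + 1) / (1 - (2:ℝ) ^ (d - σ)) :=
    div_nonneg (by positivity) (by linarith)
  intro s t hs ht x y
  rcases le_total s t with h | h
  · rw [max_eq_right h]
    refine (aux_main μ hball K d d0 hKd hdoub σ hσ s t hs h x y).trans ?_
    gcongr
    exact le_max_right _ _
  · rw [max_eq_left h]
    have h1 : ∀ z, Dkernel μ s σ x z * Dkernel μ t σ z y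
        = Dkernel μ t σ y z * Dkernel μ s σ z x := by
      intro z
      rw [aux_symm μ s σ x z, aux_symm μ t σ z y, mul_comm]
    simp_rw [h1]
    rw [aux_symm μ s σ x y]
    refine (aux_main μ hball K d d0 hKd hdoub σ hσ t s ht h y x).trans ?_
    gcongr
    exact le_max_left _ _
end

section
/- Let μ be a (K,d)-doubling Borel measure on a metric space (M,ρ) endowed with a Christ dyadic cube system with parameter δ ∈ (0,1) and with the level-j₀ subcube families. Let s ∈ ℝ, τ ∈ [0,∞), p ∈ (0,∞] and q ∈ (0,∞]. Then there exists a constant C ≥ 1 such that for every family a = {a_t^{j,ν}}_{j∈ℤ₊, t∈I_j, 1≤ν≤N_t^j} of complex numbers: ‖a‖_{b̃^{s+dτ−d/p}_{∞,∞}} ≤ C·‖a‖_{b̃^{s,τ}_{p,q}}. -/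
open MeasureTheory Metric
open scoped ENNReal

/-- A Christ dyadic cube system on a metric measure space `(M, ρ, μ)`. -/
structure ChristSystem (M : Type*) [MetricSpace M] [MeasurableSpace M] (μ : Measure M) where
  δ : ℝ
  δ_pos : 0 < δ
  δ_lt_one : δ < 1
  cSmall : ℝ
  cBig : ℝ
  cSmall_pos : 0 < cSmall
  cSmall_lt_cBig : cSmall < cBig
  I : ℤ → Type
  countable_I : ∀ j : ℤ, Countable (I j)
  Q : (j : ℤ) → I j → Set M
  center : (j : ℤ) → I j → M
  isOpen_Q : ∀ (j : ℤ) (α : I j), IsOpen (Q j α)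
  cover : ∀ j : ℤ, μ (Set.univ \ ⋃ α : I j, Q j α) = 0
  disjoint_Q : ∀ (j : ℤ) (α β : I j), α ≠ β → Q j α ∩ Q j β = ∅
  nested : ∀ (j ℓ : ℤ), j ≤ ℓ → ∀ (α : I j) (β : I ℓ), Q ℓ β ⊆ Q j α ∨ Q ℓ β ∩ Q j α = ∅
  parent : ∀ (j : ℤ) (α : I j) (ℓ : ℤ), ℓ < j → ∃! β : I ℓ, Q j α ⊆ Q ℓ β
  diam_le : ∀ (j : ℤ) (α : I j), EMetric.diam (Q j α) ≤ ENNReal.ofReal (cBig * δ ^ j)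
  ball_subset : ∀ (j : ℤ) (α : I j), ball (center j α) (cSmall * δ ^ j) ⊆ Q j α

/-- The `ℓ^q` norm (with `q ∈ (0,∞]`, usual modification when `q = ∞`) of a
sequence of extended nonnegative reals. -/
noncomputable def seqLq (q : ℝ≥0∞) (a : ℕ → ℝ≥0∞) : ℝ≥0∞ :=
  if q = ⊤ then ⨆ j, a j else (∑' j, a j ^ q.toReal) ^ (1 / q.toReal)

/-- The `L^p` quantity `(∫_A g^p dμ)^{1/p}` (ess sup over `A` when `p = ∞`) for a
nonnegative function `g`. -/
noncomputable def lpOn {M : Type*} [MetricSpace M] [MeasurableSpace M]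
    (μ : Measure M) (p : ℝ≥0∞) (A : Set M) (g : M → ℝ≥0∞) : ℝ≥0∞ :=
  if p = ⊤ then essSup g (μ.restrict A)
  else (∫⁻ x in A, g x ^ p.toReal ∂μ) ^ (1 / p.toReal)

/-- The `ℓ^q(L^p_τ)` norm of a sequence of nonnegative functions:
`sup_{k ∈ ℤ, α ∈ I_k} μ(Q_α^k)^{-τ} ( ∑_{j = max(k,0)}^∞ ( ∫_{Q_α^k} g_j^p dμ )^{q/p} )^{1/q}`. -/
noncomputable def bNorm {M : Type*} [MetricSpace M] [MeasurableSpace M] {μ : Measure M}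
    (S : ChristSystem M μ) (p q : ℝ≥0∞) (τ : ℝ) (g : ℕ → M → ℝ≥0∞) : ℝ≥0∞ :=
  ⨆ (k : ℤ) (α : S.I k), μ (S.Q k α) ^ (-τ) *
    seqLq q (fun j => if k.toNat ≤ j then lpOn μ p (S.Q k α) (g j) else 0)

/-- The `L^p_τ(ℓ^q)` norm of a sequence of nonnegative functions:
`sup_{k ∈ ℤ, α ∈ I_k} μ(Q_α^k)^{-τ} ( ∫_{Q_α^k} ( ∑_{j = max(k,0)}^∞ g_j^q )^{p/q} dμ )^{1/p}`. -/
noncomputable def fNorm {M : Type*} [MetricSpace M] [MeasurableSpace M] {μ : Measure M}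
    (S : ChristSystem M μ) (p q : ℝ≥0∞) (τ : ℝ) (g : ℕ → M → ℝ≥0∞) : ℝ≥0∞ :=
  ⨆ (k : ℤ) (α : S.I k), μ (S.Q k α) ^ (-τ) *
    lpOn μ p (S.Q k α) (fun x => seqLq q (fun j => if k.toNat ≤ j then g j x else 0))

/-- The index type of the level-`(j+j₀)` subcubes of the cube `Q_t^j`. -/
def SubIdx {M : Type*} [MetricSpace M] [MeasurableSpace M] {μ : Measure M}
    (S : ChristSystem M μ) (j₀ : ℕ) (j : ℕ) (t : S.I j) : Type :=
  {β : S.I ((j : ℤ) + j₀) // S.Q ((j : ℤ) + j₀) β ⊆ S.Q (j : ℤ) t}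

/-- The subcube `Q_t^{j,ν}`. -/
def SubQ {M : Type*} [MetricSpace M] [MeasurableSpace M] {μ : Measure M}
    (S : ChristSystem M μ) (j₀ : ℕ) (j : ℕ) (t : S.I j) (ν : SubIdx S j₀ j t) : Set M :=
  S.Q ((j : ℤ) + j₀) ν.1

/-- The level-`j` function `x ↦ ∑_{t ∈ I_j} ∑_{ν} w_t^{j,ν} |a_t^{j,ν}| χ_{E_t^{j,ν}}(x)`
associated with a coefficient family `a`, a weight family `w` and a family of sets `E`. -/
noncomputable def seqFunOn {M : Type*} [MetricSpace M] [MeasurableSpace M] {μ : Measure M}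
    (S : ChristSystem M μ) (j₀ : ℕ)
    (w : (j : ℕ) → (t : S.I j) → SubIdx S j₀ j t → ℝ≥0∞)
    (E : (j : ℕ) → (t : S.I j) → SubIdx S j₀ j t → Set M)
    (a : (j : ℕ) → (t : S.I j) → SubIdx S j₀ j t → ℂ) (j : ℕ) (x : M) : ℝ≥0∞ :=
  ∑' (t : S.I j) (ν : SubIdx S j₀ j t),
    w j t ν * (‖a j t ν‖₊ : ℝ≥0∞) * (E j t ν).indicator (fun _ => (1 : ℝ≥0∞)) x

/-- The level-`j` function `x ↦ ∑_{t ∈ I_j} ∑_{ν} w_t^{j,ν} |a_t^{j,ν}| χ_{Q_t^{j,ν}}(x)`. -/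
noncomputable def seqFun {M : Type*} [MetricSpace M] [MeasurableSpace M] {μ : Measure M}
    (S : ChristSystem M μ) (j₀ : ℕ)
    (w : (j : ℕ) → (t : S.I j) → SubIdx S j₀ j t → ℝ≥0∞)
    (a : (j : ℕ) → (t : S.I j) → SubIdx S j₀ j t → ℂ) (j : ℕ) (x : M) : ℝ≥0∞ :=
  seqFunOn S j₀ w (fun j t ν => SubQ S j₀ j t ν) a j x

/-- The weight `δ^{-js}` used for the sequence spaces `b^{s,τ}_{p,q}` and `f^{s,τ}_{p,q}`. -/
noncomputable def deltaWeight {M : Type*} [MetricSpace M] [MeasurableSpace M] {μ : Measure M}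
    (S : ChristSystem M μ) (j₀ : ℕ) (s : ℝ) :
    (j : ℕ) → (t : S.I j) → SubIdx S j₀ j t → ℝ≥0∞ :=
  fun j _ _ => ENNReal.ofReal (S.δ ^ (-(j : ℝ) * s))

/-- The weight `μ(Q_t^{j,ν})^{-s/d}` used for the sequence spaces `b̃^{s,τ}_{p,q}`
and `f̃^{s,τ}_{p,q}`. -/
noncomputable def tildeWeight {M : Type*} [MetricSpace M] [MeasurableSpace M] {μ : Measure M}
    (S : ChristSystem M μ) (j₀ : ℕ) (d s : ℝ) :
    (j : ℕ) → (t : S.I j) → SubIdx S j₀ j t → ℝ≥0∞ :=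
  fun j t ν => μ (SubQ S j₀ j t ν) ^ (-(s / d))

section helpers14

variable {M : Type*} [MetricSpace M] [MeasurableSpace M] {μ : Measure M}

lemma seqFun_eq_of_mem (S : ChristSystem M μ) (j₀ : ℕ)
    (w : (j : ℕ) → (t : S.I j) → SubIdx S j₀ j t → ℝ≥0∞)
    (a : (j : ℕ) → (t : S.I j) → SubIdx S j₀ j t → ℂ) (j : ℕ) (x : M)
    (t : S.I j) (ν : SubIdx S j₀ j t) (hx : x ∈ SubQ S j₀ j t ν) :
    seqFun S j₀ w a j x = w j t ν * (‖a j t ν‖₊ : ℝ≥0∞) := by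
  unfold seqFun seqFunOn
  rw [tsum_eq_single t, tsum_eq_single ν]
  · simp [hx]
  · intro ν' hν'
    have hne : ν'.1 ≠ ν.1 := fun h => hν' (Subtype.ext h)
    have hx' : x ∉ SubQ S j₀ j t ν' := by
      intro h
      have : x ∈ S.Q ((j : ℤ) + j₀) ν'.1 ∩ S.Q ((j : ℤ) + j₀) ν.1 := ⟨h, hx⟩
      rw [S.disjoint_Q _ _ _ hne] at this
      exact this
    simp [hx']
  · intro t' ht'
    rw [ENNReal.tsum_eq_zero]
    intro ν'
    have hx' : x ∉ SubQ S j₀ j t' ν' := by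
      intro h
      have : x ∈ S.Q (j : ℤ) t' ∩ S.Q (j : ℤ) t := ⟨ν'.2 h, ν.2 hx⟩
      rw [S.disjoint_Q _ _ _ ht'] at this
      exact this
    simp [hx']

lemma seqFun_eq_zero_of_forall (S : ChristSystem M μ) (j₀ : ℕ)
    (w : (j : ℕ) → (t : S.I j) → SubIdx S j₀ j t → ℝ≥0∞)
    (a : (j : ℕ) → (t : S.I j) → SubIdx S j₀ j t → ℂ) (j : ℕ) (x : M)
    (h : ∀ (t : S.I j) (ν : SubIdx S j₀ j t), x ∉ SubQ S j₀ j t ν) :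
    seqFun S j₀ w a j x = 0 := by
  unfold seqFun seqFunOn
  rw [ENNReal.tsum_eq_zero]
  intro t
  rw [ENNReal.tsum_eq_zero]
  intro ν
  simp [h t ν]

lemma le_seqLq (q : ℝ≥0∞) (hq : 0 < q) (a : ℕ → ℝ≥0∞) (j : ℕ) : a j ≤ seqLq q a := by
  unfold seqLq
  split_ifs with h
  · exact le_iSup a j
  · have hq' : 0 < q.toReal := ENNReal.toReal_pos hq.ne' h
    calc a j = (a j ^ q.toReal) ^ (1 / q.toReal) := by
          rw [← ENNReal.rpow_mul, mul_one_div_cancel hq'.ne', ENNReal.rpow_one]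
      _ ≤ _ := ENNReal.rpow_le_rpow (ENNReal.le_tsum (f := fun j => a j ^ q.toReal) j)
          (by positivity)

lemma le_lpOn (p : ℝ≥0∞) (hp : 0 < p) (A B : Set M) (hBA : B ⊆ A) (hB : MeasurableSet B)
    (hB0 : μ B ≠ 0) (g : M → ℝ≥0∞) (c : ℝ≥0∞) (hg : ∀ x ∈ B, g x = c) :
    c * μ B ^ (1 / p.toReal) ≤ lpOn μ p A g := by
  unfold lpOn
  split_ifs with h
  · subst h
    simp only [ENNReal.toReal_top, div_zero, ENNReal.rpow_zero, mul_one]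
    by_contra hlt
    push Not at hlt
    have h1 := ae_lt_of_essSup_lt hlt
    have h2 : ∀ᵐ x ∂(μ.restrict B), g x < c :=
      ae_mono (Measure.restrict_mono hBA le_rfl) h1
    rw [ae_restrict_iff' hB] at h2
    apply hB0
    refine measure_mono_null ?_ h2
    intro x hx hx'
    exact absurd (hx' hx) (by simp [hg x hx])
  · have hp' : 0 < p.toReal := ENNReal.toReal_pos hp.ne' h
    have h1 : c ^ p.toReal * μ B ≤ ∫⁻ x in A, g x ^ p.toReal ∂μ := by
      calc c ^ p.toReal * μ B = ∫⁻ x in B, c ^ p.toReal ∂μ := by simp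
        _ = ∫⁻ x in B, g x ^ p.toReal ∂μ :=
            (setLIntegral_congr_fun hB (fun x hx => by simp [hg x hx]))
        _ ≤ _ := lintegral_mono_set hBA
    calc c * μ B ^ (1 / p.toReal) = (c ^ p.toReal * μ B) ^ (1 / p.toReal) := by
          rw [ENNReal.mul_rpow_of_nonneg _ _ (by positivity), ← ENNReal.rpow_mul,
            mul_one_div_cancel hp'.ne', ENNReal.rpow_one]
      _ ≤ _ := ENNReal.rpow_le_rpow h1 (by positivity)

lemma cube_measure_le
    (hball : ∀ (x : M) (r : ℝ), 0 < r → 0 < μ (ball x r) ∧ μ (ball x r) < ⊤)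
    (K d : ℝ)
    (hdoub : ∀ (x : M) (r lam : ℝ), 0 < r → 1 ≤ lam →
      μ (ball x (lam * r)) ≤ ENNReal.ofReal (K * lam ^ d) * μ (ball x r))
    (S : ChristSystem M μ) (j₀ : ℕ) (j : ℕ) (t : S.I j) (ν : SubIdx S j₀ j t) :
    0 < μ (SubQ S j₀ j t ν) ∧ μ (S.Q j t) < ⊤ ∧
    μ (S.Q j t) ≤ ENNReal.ofReal (K * (2 * S.cBig / S.cSmall * (S.δ ^ j₀)⁻¹) ^ d)
      * μ (SubQ S j₀ j t ν) := by
  have hδ := S.δ_pos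
  have hc := S.cSmall_pos
  have hC : 0 < S.cBig := hc.trans S.cSmall_lt_cBig
  set z := S.center ((j : ℤ) + j₀) ν.1 with hz
  set r := S.cSmall * S.δ ^ ((j : ℤ) + j₀) with hr
  have hr0 : 0 < r := by positivity
  have hsub : ball z r ⊆ SubQ S j₀ j t ν := S.ball_subset _ _
  have hzQ : z ∈ S.Q j t := ν.2 (hsub (mem_ball_self hr0))
  have hlam : 1 ≤ 2 * S.cBig / S.cSmall * (S.δ ^ j₀)⁻¹ := by
    have h1 : 1 ≤ 2 * S.cBig / S.cSmall := by
      rw [le_div_iff₀ hc]; linarith [S.cSmall_lt_cBig]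
    have h2 : 1 ≤ (S.δ ^ j₀)⁻¹ :=
      (one_le_inv₀ (by positivity)).2 (pow_le_one₀ hδ.le S.δ_lt_one.le)
    exact one_le_mul_of_one_le_of_one_le h1 h2
  have heq : 2 * S.cBig / S.cSmall * (S.δ ^ j₀)⁻¹ * r = 2 * (S.cBig * S.δ ^ (j : ℤ)) := by
    rw [hr, zpow_add₀ hδ.ne', zpow_natCast, zpow_natCast]
    field_simp
  have hQ : S.Q j t ⊆ ball z (2 * S.cBig / S.cSmall * (S.δ ^ j₀)⁻¹ * r) := by
    intro y hy
    have hpos : 0 < S.cBig * S.δ ^ (j : ℤ) := by positivity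
    rw [heq, mem_ball]
    have h1 : edist y z ≤ ENNReal.ofReal (S.cBig * S.δ ^ (j : ℤ)) :=
      (Metric.edist_le_ediam_of_mem hy hzQ).trans (S.diam_le _ _)
    rw [edist_dist, ENNReal.ofReal_le_ofReal_iff hpos.le] at h1
    linarith
  refine ⟨(hball z r hr0).1.trans_le (measure_mono hsub), ?_, ?_⟩
  · exact (measure_mono hQ).trans_lt (hball _ _ (by positivity)).2
  · calc _ ≤ _ := measure_mono hQ
      _ ≤ _ := hdoub z r _ hr0 hlam
      _ ≤ _ := by gcongr

end helpers14

theorem stmt_14 {M : Type*} [MetricSpace M] [MeasurableSpace M] [BorelSpace M]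
    (μ : Measure M)
    (hball : ∀ (x : M) (r : ℝ), 0 < r → 0 < μ (ball x r) ∧ μ (ball x r) < ⊤)
    (K d : ℝ) (hK : 1 < K) (hd : d = Real.logb 2 K)
    (hdoub : ∀ (x : M) (r lam : ℝ), 0 < r → 1 ≤ lam →
      μ (ball x (lam * r)) ≤ ENNReal.ofReal (K * lam ^ d) * μ (ball x r))
    (S : ChristSystem M μ) (j₀ : ℕ)
    (hfin : ∀ (j : ℕ) (t : S.I j), Finite (SubIdx S j₀ j t))
    (s τ : ℝ) (hτ : 0 ≤ τ)
    (p q : ℝ≥0∞) (hp : 0 < p) (hq : 0 < q) :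
    ∃ C : ℝ, 1 ≤ C ∧
      ∀ a : (j : ℕ) → (t : S.I j) → SubIdx S j₀ j t → ℂ,
        (⨆ (j : ℕ) (x : M),
            seqFun S j₀ (tildeWeight S j₀ d (s + d * τ - d / p.toReal)) a j x)
          ≤ ENNReal.ofReal C * bNorm S p q τ (seqFun S j₀ (tildeWeight S j₀ d s) a) := by
  have hd0 : 0 < d := by rw [hd]; exact Real.logb_pos (by norm_num) hK
  set L : ℝ := K * (2 * S.cBig / S.cSmall * (S.δ ^ j₀)⁻¹) ^ d with hL
  have hL0 : 0 ≤ L := by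
    have h1 := S.δ_pos
    have h2 := S.cSmall_pos
    have h3 : 0 < S.cBig := h2.trans S.cSmall_lt_cBig
    have h4 : 0 < K := by linarith
    positivity
  refine ⟨max 1 (L ^ τ), le_max_left _ _, fun a => ?_⟩
  refine iSup_le fun j => iSup_le fun x => ?_
  by_cases hx : ∃ (t : S.I j) (ν : SubIdx S j₀ j t), x ∈ SubQ S j₀ j t ν
  swap
  · push Not at hx
    rw [seqFun_eq_zero_of_forall S j₀ _ a j x hx]
    exact zero_le
  obtain ⟨t, ν, hx⟩ := hx
  obtain ⟨hB0, hAtop, hAB⟩ := cube_measure_le hball K d hdoub S j₀ j t ν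
  have hBA : SubQ S j₀ j t ν ⊆ S.Q j t := ν.2
  have hBAm := measure_mono (μ := μ) hBA
  rw [← hL] at hAB
  have hlp := le_lpOn (μ := μ) p hp (S.Q j t) _ hBA (S.isOpen_Q _ _).measurableSet hB0.ne'
    (seqFun S j₀ (tildeWeight S j₀ d s) a j) _
    (fun y hy => seqFun_eq_of_mem S j₀ _ a j y t ν hy)
  have hb : μ (S.Q j t) ^ (-τ) * lpOn μ p (S.Q j t) (seqFun S j₀ (tildeWeight S j₀ d s) a j)
      ≤ bNorm S p q τ (seqFun S j₀ (tildeWeight S j₀ d s) a) := by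
    unfold bNorm
    refine le_trans ?_ (le_iSup₂ (f := fun (k : ℤ) (α : S.I k) => μ (S.Q k α) ^ (-τ) *
      seqLq q (fun i => if k.toNat ≤ i then lpOn μ p (S.Q k α)
        (seqFun S j₀ (tildeWeight S j₀ d s) a i) else 0)) (j : ℤ) t)
    refine mul_le_mul_right (le_trans ?_ (le_seqLq q hq _ j)) _
    simp
  rw [seqFun_eq_of_mem S j₀ _ a j x t ν hx]
  refine le_trans ?_ (mul_le_mul_right ((mul_le_mul_right hlp _).trans hb) _)
  unfold tildeWeight
  set A := μ (S.Q j t)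
  set B := μ (SubQ S j₀ j t ν)
  have hBtop : B ≠ ⊤ := (hBAm.trans_lt hAtop).ne
  have hA0 : A ≠ 0 := (hB0.trans_le hBAm).ne'
  have hinv : B⁻¹ ≤ ENNReal.ofReal L * A⁻¹ := by
    calc B⁻¹ = A⁻¹ * A * B⁻¹ := by rw [ENNReal.inv_mul_cancel hA0 hAtop.ne, one_mul]
      _ ≤ A⁻¹ * (ENNReal.ofReal L * B) * B⁻¹ := by gcongr
      _ = A⁻¹ * ENNReal.ofReal L * (B * B⁻¹) := by ring
      _ = _ := by rw [ENNReal.mul_inv_cancel hB0.ne' hBtop, mul_one, mul_comm]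
  have hpow : B ^ (-τ) ≤ ENNReal.ofReal (max 1 (L ^ τ)) * A ^ (-τ) := by
    rw [ENNReal.rpow_neg, ENNReal.rpow_neg, ← ENNReal.inv_rpow, ← ENNReal.inv_rpow]
    calc B⁻¹ ^ τ ≤ (ENNReal.ofReal L * A⁻¹) ^ τ := ENNReal.rpow_le_rpow hinv hτ
      _ = ENNReal.ofReal (L ^ τ) * A⁻¹ ^ τ := by
          rw [ENNReal.mul_rpow_of_nonneg _ _ hτ, ENNReal.ofReal_rpow_of_nonneg hL0 hτ]
      _ ≤ _ := by gcongr; exact le_max_right _ _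
  have hexp : -((s + d * τ - d / p.toReal) / d) = -(s / d) + 1 / p.toReal + -τ := by
    have h1 : d / p.toReal / d = 1 / p.toReal := by
      rw [div_div, mul_comm, ← div_div, div_self hd0.ne']
    rw [sub_div, add_div, h1, mul_div_cancel_left₀ _ hd0.ne']
    ring
  rw [hexp, ENNReal.rpow_add _ _ hB0.ne' hBtop, ENNReal.rpow_add _ _ hB0.ne' hBtop]
  calc _ = B ^ (-τ) * (B ^ (-(s / d)) * (‖a j t ν‖₊ : ℝ≥0∞) * B ^ (1 / p.toReal)) := by ring
    _ ≤ (ENNReal.ofReal (max 1 (L ^ τ)) * A ^ (-τ)) *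
        (B ^ (-(s / d)) * (‖a j t ν‖₊ : ℝ≥0∞) * B ^ (1 / p.toReal)) := by gcongr
    _ = _ := by ring
end

section
/- Let μ be a (K,d)-doubling Borel measure on a metric space (M,ρ) endowed with a Christ dyadic cube system with parameter δ ∈ (0,1) and with the level-j₀ subcube families. Let ε ∈ (0,1], s ∈ ℝ, p ∈ (0,∞), q ∈ (0,∞], τ ∈ [0,∞). For every j ∈ ℤ₊, t ∈ I_j and 1 ≤ ν ≤ N_t^j, let S_t^{j,ν} ⊆ Q_t^{j,ν} be a measurable set with μ(S_t^{j,ν}) ≥ ε·μ(Q_t^{j,ν}). Then there exists a constant C ≥ 1, depending on ε, s, p, q, τ (and the cube system and doubling constants) but not on a or the sets S, such that for every family a = {a_t^{j,ν}} of complex numbers: C^{−1}·‖a‖_{f^{s,τ}_{p,q}} ≤ sup_{k∈ℤ, α∈I_k} μ(Q_α^k)^{−τ}( ∫_{Q_α^k} ( ∑_{j=max(k,0)}^∞ ( ∑_{t∈I_j}∑_{ν=1}^{N_t^j} δ^{−js}|a_t^{j,ν}|χ_{S_t^{j,ν}}(x) )^q )^{p/q} dμ(x) )^{1/p} ≤ ‖a‖_{f^{s,τ}_{p,q}},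 and the analogous two-sided estimate holds for the tilde norm f̃^{s,τ}_{p,q} with δ^{−js} replaced by μ(Q_t^{j,ν})^{−s/d}. -/
open MeasureTheory Metric
open scoped ENNReal

open Finset in
lemma real_concave_key {r A B u : ℝ} (hr0 : 0 < r) (hr1 : r ≤ 1) (hB : 0 ≤ B) (hBA : B ≤ A)
    (hu : 0 ≤ u) : B ^ r + (A + u) ^ r ≤ (B + u) ^ r + A ^ r := by
  rcases eq_or_lt_of_le (show 0 ≤ A - B + u by linarith) with h | h
  · have h1 : u = 0 := by linarith
    have h2 : A = B := by linarith
    subst h2; simp [h1]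
  · have hc := Real.concaveOn_rpow hr0.le hr1
    have hs : A - B + u ≠ 0 := h.ne'
    have k1 := hc.2 (show B ∈ Set.Ici 0 from hB) (show A + u ∈ Set.Ici (0:ℝ) from
      (by simp only [Set.mem_Ici]; linarith))
      (show 0 ≤ u / (A - B + u) by positivity)
      (show 0 ≤ (A - B) / (A - B + u) from div_nonneg (by linarith) h.le) (by field_simp; ring)
    have k2 := hc.2 (show B ∈ Set.Ici 0 from hB) (show A + u ∈ Set.Ici (0:ℝ) from
      (by simp only [Set.mem_Ici]; linarith))
      (show 0 ≤ (A - B) / (A - B + u) from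
      div_nonneg (by linarith) h.le) (show 0 ≤ u / (A - B + u) by positivity) (by field_simp)
    simp only [smul_eq_mul] at k1 k2
    have e1 : u / (A - B + u) * B + (A - B) / (A - B + u) * (A + u) = A := by
      field_simp; ring
    have e2 : (A - B) / (A - B + u) * B + u / (A - B + u) * (A + u) = B + u := by
      field_simp; ring
    have e3 : u / (A - B + u) = 1 - (A - B) / (A - B + u) := by field_simp; ring
    rw [e1] at k1
    rw [e2] at k2
    rw [e3] at k1 k2
    linarith

lemma enn_concave_key {r : ℝ} (hr0 : 0 < r) (hr1 : r ≤ 1) {A B u : ℝ≥0∞} (hBA : B ≤ A) :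
    B ^ r + ((A + u) ^ r - A ^ r) ≤ (B + u) ^ r := by
  by_cases hA : A = ⊤
  · subst hA
    simp only [top_add, tsub_self, add_zero]
    exact ENNReal.rpow_le_rpow le_self_add hr0.le
  by_cases hu : u = ⊤
  · subst hu; simp [ENNReal.top_rpow_of_pos hr0]
  have hB : B ≠ ⊤ := ne_top_of_le_ne_top hA hBA
  have hAr : A ^ r ≠ ⊤ := ENNReal.rpow_ne_top_of_nonneg hr0.le hA
  rw [← ENNReal.toReal_le_toReal]
  · have h1 : A ^ r ≤ (A + u) ^ r := ENNReal.rpow_le_rpow le_self_add hr0.le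
    rw [ENNReal.toReal_add, ENNReal.toReal_sub_of_le h1]
    · simp only [← ENNReal.toReal_rpow, ENNReal.toReal_add hA hu, ENNReal.toReal_add hB hu]
      have := real_concave_key hr0 hr1 (A := A.toReal) (B := B.toReal) (u := u.toReal)
        ENNReal.toReal_nonneg (ENNReal.toReal_mono hA hBA) ENNReal.toReal_nonneg
      linarith
    all_goals simp [hA, hu, hB, hr0.le]
  all_goals simp [hA, hu, hB, hr0.le]

lemma real_convex_key {r A u : ℝ} (hr : 1 ≤ r) (hA : 0 ≤ A) (hu : 0 ≤ u) :
    (A + u) ^ r ≤ A ^ r + r * (u * (A + u) ^ (r - 1)) := by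
  rcases eq_or_lt_of_le (show 0 ≤ A + u by linarith) with h | h
  · have h1 : u = 0 := by linarith
    simp [h1]
  · have k := one_add_mul_self_le_rpow_one_add (s := - u / (A + u)) (p := r)
      (by rw [le_div_iff₀ h]; linarith) hr
    have e : 1 + - u / (A + u) = A / (A + u) := by field_simp; ring
    rw [e, Real.div_rpow hA h.le, le_div_iff₀ (by positivity)] at k
    have e2 : (A + u) ^ r = (A + u) ^ (r - 1) * (A + u) := by
      rw [Real.rpow_sub_one h.ne']; field_simp
    have e3 : (1 + r * (-u / (A + u))) * (A + u) ^ r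
        = (A + u) ^ r - r * (u * (A + u) ^ (r - 1)) := by
      rw [e2]; field_simp; ring
    linarith

lemma enn_convex_key {r : ℝ} (hr : 1 < r) {A u : ℝ≥0∞} :
    (A + u) ^ r ≤ A ^ r + ENNReal.ofReal r * (u * (A + u) ^ (r - 1)) := by
  have hr0 : 0 < r := by linarith
  by_cases hA : A = ⊤
  · subst hA
    simp [ENNReal.top_rpow_of_pos hr0]
  by_cases hu : u = ⊤
  · subst hu
    have : ENNReal.ofReal r ≠ 0 := by simpa using hr0
    simp [ENNReal.top_rpow_of_pos (show 0 < r - 1 by linarith), ENNReal.mul_top this]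
  have h1 : 0 ≤ r - 1 := by linarith
  rw [← ENNReal.toReal_le_toReal]
  · rw [ENNReal.toReal_add]
    · simp only [← ENNReal.toReal_rpow, ENNReal.toReal_add hA hu, ENNReal.toReal_mul,
        ENNReal.toReal_ofReal hr0.le]
      exact real_convex_key hr.le ENNReal.toReal_nonneg ENNReal.toReal_nonneg
    · simp [hA, hr0.le]
    · exact ENNReal.mul_ne_top (by simp) (ENNReal.mul_ne_top hu
      (ENNReal.rpow_ne_top_of_nonneg h1 (by simp [hA, hu])))
  · simp [hA, hu, hr0.le]
  · refine ENNReal.add_ne_top.2 ⟨by simp [hA, hr0.le], ?_⟩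
    exact ENNReal.mul_ne_top (by simp) (ENNReal.mul_ne_top hu
      (ENNReal.rpow_ne_top_of_nonneg h1 (by simp [hA, hu])))

lemma enn_young {r : ℝ} (hr : 1 < r) (A B c : ℝ≥0∞) :
    c * (A ^ (r - 1) * B) ≤ A ^ r / 2 + (2 * c) ^ r * B ^ r := by
  have h1 : 0 ≤ r - 1 := by linarith
  have e : ∀ x : ℝ≥0∞, x ^ (r - 1) * x = x ^ r := fun x => by
    conv_lhs => rw [← ENNReal.rpow_one x, ← ENNReal.rpow_mul,
      ← ENNReal.rpow_add_of_nonneg _ _ (by simpa using h1) zero_le_one]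
    congr 1; ring
  rcases le_total (2 * (c * B)) A with h | h
  · refine le_trans ?_ le_self_add
    rw [← e A, mul_left_comm, mul_div_assoc]
    gcongr
    rw [ENNReal.le_div_iff_mul_le (by simp) (by simp), mul_comm]
    exact h
  · refine le_trans ?_ le_add_self
    rw [← ENNReal.mul_rpow_of_nonneg _ _ (by linarith : 0 ≤ r), mul_assoc, mul_left_comm,
      ← e (2 * (c * B))]
    refine mul_le_mul' (ENNReal.rpow_le_rpow h h1) ?_
    rw [two_mul]; exact le_self_add

section abstractPart

variable {X : Type*} [MeasurableSpace X]

/-- The stability property of the sets `F n` with respect to the relations `R n`. -/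
def Thick (ν : Measure X) (R : ℕ → X → X → Prop) (F : ℕ → Set X) (c : ℝ≥0∞) : Prop :=
  ∀ (n : ℕ) (φ : X → ℝ≥0∞), (∀ x y, R n x y → φ x = φ y) →
    ∫⁻ x, φ x ∂ν ≤ c * ∫⁻ x in F n, φ x ∂ν

variable {ν : Measure X} {R : ℕ → X → X → Prop} {F : ℕ → Set X} {c : ℝ≥0∞}

lemma step_one (hF : ∀ n, MeasurableSet (F n)) (hT : Thick ν R F c)
    (A B : ℕ → X → ℝ≥0∞) (hA : ∀ n, Measurable (A n)) (hB : ∀ n, Measurable (B n))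
    (hA0 : ∀ x, A 0 x = 0) (hAm : ∀ n x, A n x ≤ A (n + 1) x) (hBm : ∀ n x, B n x ≤ B (n + 1) x)
    (hR : ∀ n x y, R n x y → A n x = A n y ∧ A (n + 1) x = A (n + 1) y)
    (hkey : ∀ n x, x ∈ F n → B n x + (A (n + 1) x - A n x) ≤ B (n + 1) x) (n : ℕ) :
    ∫⁻ x, A n x ∂ν ≤ c * ∫⁻ x, B n x ∂ν := by
  induction n with
  | zero => simp [hA0]
  | succ n ih =>
    calc ∫⁻ x, A (n + 1) x ∂ν = ∫⁻ x, (A n x + (A (n + 1) x - A n x)) ∂ν := by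
          simp only [add_tsub_cancel_of_le (hAm n _)]
      _ = ∫⁻ x, A n x ∂ν + ∫⁻ x, (A (n + 1) x - A n x) ∂ν := lintegral_add_left (hA n) _
      _ ≤ c * ∫⁻ x, B n x ∂ν + c * ∫⁻ x in F n, (A (n + 1) x - A n x) ∂ν := by
          gcongr
          apply hT
          intro x y hxy
          rw [(hR n x y hxy).1, (hR n x y hxy).2]
      _ = c * ∫⁻ x, (B n x + (F n).indicator (fun x => A (n + 1) x - A n x) x) ∂ν := by
          rw [lintegral_add_left (hB n), lintegral_indicator (hF n), mul_add]
      _ ≤ c * ∫⁻ x, B (n + 1) x ∂ν := by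
          gcongr with x
          by_cases hx : x ∈ F n
          · simpa [hx] using hkey n x hx
          · simpa [hx] using hBm n x

/-- the truncation of `g` to the sets `F` -/
noncomputable def cut (F : ℕ → Set X) (g : ℕ → X → ℝ≥0∞) (n : ℕ) (x : X) : ℝ≥0∞ :=
  (F n).indicator (g n) x

lemma cut_le (g : ℕ → X → ℝ≥0∞) (n : ℕ) (x : X) : cut F g n x ≤ g n x :=
  Set.indicator_le_self _ _ _

lemma cut_meas (hF : ∀ n, MeasurableSet (F n)) {g : ℕ → X → ℝ≥0∞} (hg : ∀ n, Measurable (g n))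
    (n : ℕ) : Measurable (cut F g n) := (hg n).indicator (hF n)

lemma abs_sum_le_one (hF : ∀ n, MeasurableSet (F n)) (hT : Thick ν R F c)
    (hRm : ∀ i n x y, i ≤ n → R n x y → R i x y)
    (u : ℕ → X → ℝ≥0∞) (hu : ∀ n, Measurable (u n)) (huR : ∀ n x y, R n x y → u n x = u n y)
    {r : ℝ} (hr0 : 0 < r) (hr1 : r ≤ 1) (n : ℕ) :
    ∫⁻ x, (∑ j ∈ Finset.range n, u j x) ^ r ∂ν ≤
      c * ∫⁻ x, (∑ j ∈ Finset.range n, cut F u j x) ^ r ∂ν := by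
  have hc := cut_meas hF hu
  refine step_one hF hT (fun n x => (∑ j ∈ Finset.range n, u j x) ^ r)
    (fun n x => (∑ j ∈ Finset.range n, cut F u j x) ^ r) (fun n => by fun_prop)
    (fun n => by fun_prop) ?_ ?_ ?_ ?_ ?_ n
  · intro x; simp [hr0]
  · intro n x; rw [Finset.sum_range_succ]
    exact ENNReal.rpow_le_rpow le_self_add hr0.le
  · intro n x; rw [Finset.sum_range_succ]
    exact ENNReal.rpow_le_rpow le_self_add hr0.le
  · intro n x y h
    have : ∀ m ≤ n + 1, ∑ j ∈ Finset.range m, u j x = ∑ j ∈ Finset.range m, u j y := by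
      intro m hm
      refine Finset.sum_congr rfl fun i hi => huR i x y (hRm i n x y ?_ h)
      have := Finset.mem_range.1 hi; omega
    rw [this n (by omega), this (n + 1) le_rfl]; simp
  · intro n x hx
    rw [Finset.sum_range_succ, Finset.sum_range_succ]
    have e : cut F u n x = u n x := by simp [cut, hx]
    rw [e]
    exact enn_concave_key hr0 hr1 (Finset.sum_le_sum fun i _ => cut_le u i x)

lemma meas_sup {u : ℕ → X → ℝ≥0∞} (hu : ∀ n, Measurable (u n)) (n : ℕ) :
    Measurable (fun x => (Finset.range n).sup (fun j => u j x)) := by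
  induction n with
  | zero => simp
  | succ n ih =>
    simp only [Finset.range_add_one, Finset.sup_insert]
    exact (hu n).sup ih

lemma abs_sup (hF : ∀ n, MeasurableSet (F n)) (hT : Thick ν R F c)
    (hRm : ∀ i n x y, i ≤ n → R n x y → R i x y)
    (u : ℕ → X → ℝ≥0∞) (hu : ∀ n, Measurable (u n)) (huR : ∀ n x y, R n x y → u n x = u n y)
    (n : ℕ) :
    ∫⁻ x, (Finset.range n).sup (fun j => u j x) ∂ν ≤
      c * ∫⁻ x, (Finset.range n).sup (fun j => cut F u j x) ∂ν := by
  have hc := cut_meas hF hu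
  refine step_one hF hT (fun n x => (Finset.range n).sup (fun j => u j x))
    (fun n x => (Finset.range n).sup (fun j => cut F u j x))
    (fun n => meas_sup hu n) (fun n => meas_sup hc n) ?_ ?_ ?_ ?_ ?_ n
  · intro x; simp
  · intro n x; exact Finset.sup_mono (by simp)
  · intro n x; exact Finset.sup_mono (by simp)
  · intro n x y h
    have : ∀ m ≤ n + 1, (Finset.range m).sup (fun j => u j x)
        = (Finset.range m).sup (fun j => u j y) := by
      intro m hm
      refine Finset.sup_congr rfl fun i hi => huR i x y (hRm i n x y ?_ h)
      have := Finset.mem_range.1 hi; omega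
    rw [this n (by omega), this (n + 1) le_rfl]; simp
  · intro n x hx
    rw [Finset.range_add_one, Finset.sup_insert, Finset.sup_insert]
    have e : cut F u n x = u n x := by simp [cut, hx]
    rw [e]
    have hBA : (Finset.range n).sup (fun j => cut F u j x) ≤ (Finset.range n).sup (fun j => u j x) :=
      Finset.sup_mono_fun fun i _ => cut_le u i x
    generalize (Finset.range n).sup (fun j => cut F u j x) = b at *
    generalize (Finset.range n).sup (fun j => u j x) = a at *
    rcases le_total (u n x) a with h | h
    · simp [h]
    · rw [sup_eq_left.2 h, sup_eq_left.2 (hBA.trans h)]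
      calc b + (u n x - a) ≤ a + (u n x - a) := by gcongr
        _ = u n x := add_tsub_cancel_of_le h

lemma abs_sum_gt_one_bdd [IsFiniteMeasure ν]
    (hF : ∀ n, MeasurableSet (F n)) (hT : Thick ν R F c)
    (hRm : ∀ i n x y, i ≤ n → R n x y → R i x y)
    (u : ℕ → X → ℝ≥0∞) (hu : ∀ n, Measurable (u n)) (huR : ∀ n x y, R n x y → u n x = u n y)
    (N : ℕ) (huN : ∀ n x, u n x ≤ N) 
    {r : ℝ} (hr : 1 < r) (n : ℕ) :
    ∫⁻ x, (∑ j ∈ Finset.range n, u j x) ^ r ∂ν ≤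
      2 * (2 * (ENNReal.ofReal r * c)) ^ r *
        ∫⁻ x, (∑ j ∈ Finset.range n, cut F u j x) ^ r ∂ν := by
  have hc := cut_meas hF hu
  have hr0 : 0 < r := by linarith
  have hr1 : 0 < r - 1 := by linarith
  have main : ∀ n, ∫⁻ x, (∑ j ∈ Finset.range n, u j x) ^ r ∂ν ≤ (ENNReal.ofReal r * c) *
      ∫⁻ x, ((∑ j ∈ Finset.range n, u j x) ^ (r - 1) * ∑ j ∈ Finset.range n, cut F u j x) ∂ν := by
    intro n
    induction n with
    | zero => simp [hr0]
    | succ n ih =>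
      calc ∫⁻ x, (∑ j ∈ Finset.range (n + 1), u j x) ^ r ∂ν
          ≤ ∫⁻ x, ((∑ j ∈ Finset.range n, u j x) ^ r + ENNReal.ofReal r *
              (u n x * (∑ j ∈ Finset.range (n + 1), u j x) ^ (r - 1))) ∂ν := by
            gcongr with x
            rw [Finset.sum_range_succ]
            exact enn_convex_key hr
        _ = ∫⁻ x, (∑ j ∈ Finset.range n, u j x) ^ r ∂ν + ENNReal.ofReal r *
              ∫⁻ x, (u n x * (∑ j ∈ Finset.range (n + 1), u j x) ^ (r - 1)) ∂ν := by
            rw [lintegral_add_left (by fun_prop), lintegral_const_mul _ (by fun_prop)]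
        _ ≤ (ENNReal.ofReal r * c) *
              ∫⁻ x, ((∑ j ∈ Finset.range n, u j x) ^ (r - 1) *
                ∑ j ∈ Finset.range n, cut F u j x) ∂ν +
            ENNReal.ofReal r * (c *
              ∫⁻ x in F n, (u n x * (∑ j ∈ Finset.range (n + 1), u j x) ^ (r - 1)) ∂ν) := by
            gcongr
            apply hT
            intro x y hxy
            have : ∑ j ∈ Finset.range (n + 1), u j x = ∑ j ∈ Finset.range (n + 1), u j y := by
              refine Finset.sum_congr rfl fun i hi => huR i x y (hRm i n x y ?_ hxy)
              have := Finset.mem_range.1 hi; omega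
            rw [this, huR n x y hxy]
        _ = (ENNReal.ofReal r * c) *
              ∫⁻ x, ((∑ j ∈ Finset.range n, u j x) ^ (r - 1) *
                ∑ j ∈ Finset.range n, cut F u j x + (F n).indicator
                (fun x => u n x * (∑ j ∈ Finset.range (n + 1), u j x) ^ (r - 1)) x) ∂ν := by
            rw [lintegral_add_left (by fun_prop), lintegral_indicator (hF n)]
            ring
        _ ≤ _ := by
            gcongr with x
            rw [Finset.sum_range_succ (fun j => cut F u j x), mul_add]
            have e : (F n).indicator
                (fun x => u n x * (∑ j ∈ Finset.range (n + 1), u j x) ^ (r - 1)) x =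
                (∑ j ∈ Finset.range (n + 1), u j x) ^ (r - 1) * cut F u n x := by
              by_cases hx : x ∈ F n <;> simp [cut, hx, mul_comm]
            rw [e]
            gcongr
            simp
  have hfin : ∫⁻ x, (∑ j ∈ Finset.range n, u j x) ^ r ∂ν ≠ ⊤ := by
    refine ne_top_of_le_ne_top (b := ∫⁻ x, ((n : ℝ≥0∞) * N) ^ r ∂ν) ?_ ?_
    · rw [lintegral_const]
      refine ENNReal.mul_ne_top (ENNReal.rpow_ne_top_of_nonneg hr0.le ?_) (measure_ne_top _ _)
      exact ENNReal.mul_ne_top (by simp) (by simp)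
    · gcongr with x
      calc ∑ j ∈ Finset.range n, u j x ≤ ∑ j ∈ Finset.range n, (N : ℝ≥0∞) :=
            Finset.sum_le_sum fun i _ => huN i x
        _ = _ := by simp
  set Z := ∫⁻ x, (∑ j ∈ Finset.range n, u j x) ^ r ∂ν with hZ
  set Y := ∫⁻ x, (∑ j ∈ Finset.range n, cut F u j x) ^ r ∂ν with hY
  have h2 : Z ≤ Z / 2 + (2 * (ENNReal.ofReal r * c)) ^ r * Y := by
    calc Z ≤ _ := main n
      _ = ∫⁻ x, (ENNReal.ofReal r * c) * ((∑ j ∈ Finset.range n, u j x) ^ (r - 1) *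
          ∑ j ∈ Finset.range n, cut F u j x) ∂ν := by
          rw [lintegral_const_mul _ (by fun_prop)]
      _ ≤ ∫⁻ x, ((∑ j ∈ Finset.range n, u j x) ^ r / 2 + (2 * (ENNReal.ofReal r * c)) ^ r *
          (∑ j ∈ Finset.range n, cut F u j x) ^ r) ∂ν := by
          gcongr with x
          exact enn_young hr _ _ _
      _ = _ := by
          rw [lintegral_add_left (by fun_prop), lintegral_const_mul _ (by fun_prop)]
          simp only [div_eq_mul_inv]
          rw [lintegral_mul_const _ (by fun_prop)]
  have h3 : Z / 2 ≤ (2 * (ENNReal.ofReal r * c)) ^ r * Y := by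
    nth_rw 1 [← ENNReal.add_halves Z] at h2
    exact (ENNReal.add_le_add_iff_left (ENNReal.div_ne_top hfin (by simp))).1 h2
  calc Z = 2 * (Z / 2) := by rw [ENNReal.mul_div_cancel (by simp) (by simp)]
    _ ≤ 2 * ((2 * (ENNReal.ofReal r * c)) ^ r * Y) := by gcongr
    _ = _ := by rw [mul_assoc]

lemma rpow_iSup {r : ℝ} (hr : 0 < r) {ι : Type*} (f : ι → ℝ≥0∞) : (⨆ i, f i) ^ r = ⨆ i, f i ^ r :=
  (ENNReal.orderIsoRpow r hr).map_iSup f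

lemma abs_sum_gt_one [IsFiniteMeasure ν]
    (hF : ∀ n, MeasurableSet (F n)) (hT : Thick ν R F c)
    (hRm : ∀ i n x y, i ≤ n → R n x y → R i x y)
    (u : ℕ → X → ℝ≥0∞) (hu : ∀ n, Measurable (u n)) (huR : ∀ n x y, R n x y → u n x = u n y)
    {r : ℝ} (hr : 1 < r) (n : ℕ) :
    ∫⁻ x, (∑ j ∈ Finset.range n, u j x) ^ r ∂ν ≤
      2 * (2 * (ENNReal.ofReal r * c)) ^ r *
        ∫⁻ x, (∑ j ∈ Finset.range n, cut F u j x) ^ r ∂ν := by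
  have hr0 : 0 < r := by linarith
  have hm : ∀ j x, Monotone (fun N : ℕ => min (u j x) (N : ℝ≥0∞)) := fun j x N N' h =>
    min_le_min_left _ (by exact_mod_cast h)
  have e : ∀ x, (∑ j ∈ Finset.range n, u j x) ^ r
      = ⨆ N : ℕ, (∑ j ∈ Finset.range n, min (u j x) (N : ℝ≥0∞)) ^ r := by
    intro x
    rw [← rpow_iSup hr0, ← ENNReal.finsetSum_iSup_of_monotone (fun j => hm j x)]
    congr 1
    refine Finset.sum_congr rfl fun j _ => ?_
    rw [← inf_iSup_eq, ENNReal.iSup_natCast]; simp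
  simp only [e]
  rw [lintegral_iSup (fun N => by fun_prop)]
  · refine iSup_le fun N => ?_
    refine (abs_sum_gt_one_bdd hF hT hRm (fun j x => min (u j x) (N : ℝ≥0∞))
      (fun n => by fun_prop) (fun n x y h => by rw [huR n x y h]) N (fun n x => min_le_right _ _)
      hr n).trans ?_
    gcongr with x j
    unfold cut
    apply Set.indicator_le_indicator
    exact min_le_left _ _
  · intro N N' h x
    dsimp only
    gcongr

lemma abs_main (p q c : ℝ≥0∞) (hp0 : 0 < p) (hpt : p ≠ ⊤) (hq : 0 < q) (hc : c ≠ ⊤) :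
    ∃ C : ℝ≥0∞, C ≠ ⊤ ∧ ∀ {X : Type*} [MeasurableSpace X] (ν : Measure X) [IsFiniteMeasure ν]
      (R : ℕ → X → X → Prop) (F : ℕ → Set X) (_ : ∀ n, MeasurableSet (F n)) (_ : Thick ν R F c)
      (_ : ∀ i n x y, i ≤ n → R n x y → R i x y)
      (g : ℕ → X → ℝ≥0∞) (_ : ∀ n, Measurable (g n)) (_ : ∀ n x y, R n x y → g n x = g n y),
      ∫⁻ x, seqLq q (fun j => g j x) ^ p.toReal ∂ν ≤
        C * ∫⁻ x, seqLq q (fun j => cut F g j x) ^ p.toReal ∂ν := by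
  have hp : 0 < p.toReal := ENNReal.toReal_pos hp0.ne' hpt
  by_cases hqt : q = ⊤
  · refine ⟨c, hc, ?_⟩
    intro X _ ν _ R F hF hT hRm g hg hgR
    simp only [seqLq, hqt, if_true]
    have hc' : ∀ j x, cut F (fun j x => g j x ^ p.toReal) j x = cut F g j x ^ p.toReal := by
      intro j x
      by_cases hx : x ∈ F j <;> simp [cut, hx, hp]
    have hs : ∀ v : ℕ → ℝ≥0∞, ⨆ j, v j = ⨆ n, (Finset.range n).sup v := by
      intro v
      apply le_antisymm
      · refine iSup_le fun j => le_iSup_of_le (j + 1) ?_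
        exact Finset.le_sup (f := v) (by simp)
      · exact iSup_le fun n => Finset.sup_le fun j _ => le_iSup v j
    simp only [rpow_iSup hp]
    simp only [hs (fun j => g j _ ^ p.toReal)]
    rw [lintegral_iSup]
    · refine iSup_le fun n => (abs_sup hF hT hRm (fun j x => g j x ^ p.toReal)
        (fun n => by fun_prop) (fun n x y h => by rw [hgR n x y h]) n).trans ?_
      gcongr with x
      simp only [hc']
      exact Finset.sup_le fun j _ => le_iSup (fun j => cut F g j x ^ p.toReal) j
    · intro n
      exact meas_sup (u := fun j x => g j x ^ p.toReal) (fun n => by fun_prop) n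
    · intro n m h x
      exact Finset.sup_mono (by simpa using h)
  have hq' : 0 < q.toReal := ENNReal.toReal_pos hq.ne' hqt
  set r := 1 / q.toReal * p.toReal with hrdef
  have hr0 : 0 < r := by positivity
  obtain ⟨C, hC, h⟩ : ∃ C : ℝ≥0∞, C ≠ ⊤ ∧ ∀ {X : Type _} [MeasurableSpace X] (ν : Measure X)
      [IsFiniteMeasure ν]
      (R : ℕ → X → X → Prop) (F : ℕ → Set X) (_ : ∀ n, MeasurableSet (F n)) (_ : Thick ν R F c)
      (_ : ∀ i n x y, i ≤ n → R n x y → R i x y)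
      (u : ℕ → X → ℝ≥0∞) (_ : ∀ n, Measurable (u n)) (_ : ∀ n x y, R n x y → u n x = u n y) (n : ℕ),
      ∫⁻ x, (∑ j ∈ Finset.range n, u j x) ^ r ∂ν ≤
      C * ∫⁻ x, (∑ j ∈ Finset.range n, cut F u j x) ^ r ∂ν := by
    rcases le_or_gt r 1 with h1 | h1
    · exact ⟨c, hc, fun ν _ R F hF hT hRm u hu huR n =>
        abs_sum_le_one hF hT hRm u hu huR hr0 h1 n⟩
    · refine ⟨2 * (2 * (ENNReal.ofReal r * c)) ^ r, ?_, fun ν _ R F hF hT hRm u hu huR n =>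
        abs_sum_gt_one hF hT hRm u hu huR h1 n⟩
      refine ENNReal.mul_ne_top (by simp) (ENNReal.rpow_ne_top_of_nonneg hr0.le ?_)
      exact ENNReal.mul_ne_top (by simp) (ENNReal.mul_ne_top (by simp) hc)
  refine ⟨C, hC, ?_⟩
  intro X _ ν _ R F hF hT hRm g hg hgR
  simp only [seqLq, hqt, if_false, ← ENNReal.rpow_mul, ← hrdef]
  have hc' : ∀ j x, cut F (fun j x => g j x ^ q.toReal) j x = cut F g j x ^ q.toReal := by
    intro j x
    by_cases hx : x ∈ F j <;> simp [cut, hx, hq']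
  have e : ∀ x, (∑' j, g j x ^ q.toReal) ^ r
      = ⨆ n, (∑ j ∈ Finset.range n, g j x ^ q.toReal) ^ r := fun x => by
    rw [ENNReal.tsum_eq_iSup_nat, rpow_iSup hr0]
  simp only [e]
  rw [lintegral_iSup (fun N => by fun_prop)]
  · refine iSup_le fun n => (h ν R F hF hT hRm (fun j x => g j x ^ q.toReal)
      (fun n => by fun_prop) (fun n x y h => by rw [hgR n x y h]) n).trans ?_
    gcongr with x
    simp only [hc']
    exact ENNReal.sum_le_tsum _
  · intro n m h x
    dsimp only
    gcongr

end abstractPart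

section concretePart

variable {M : Type*} [MetricSpace M] [MeasurableSpace M] {μ : Measure M}

lemma center_mem (S : ChristSystem M μ) (j : ℤ) (α : S.I j) : S.center j α ∈ S.Q j α :=
  S.ball_subset j α (mem_ball_self (mul_pos S.cSmall_pos (zpow_pos S.δ_pos j)))

lemma Q_pos (hball : ∀ (x : M) (r : ℝ), 0 < r → 0 < μ (ball x r) ∧ μ (ball x r) < ⊤)
    (S : ChristSystem M μ) (j : ℤ) (α : S.I j) : 0 < μ (S.Q j α) :=
  (hball _ _ (mul_pos S.cSmall_pos (zpow_pos S.δ_pos j))).1.trans_le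
    (measure_mono (S.ball_subset j α))

lemma Q_fin (hball : ∀ (x : M) (r : ℝ), 0 < r → 0 < μ (ball x r) ∧ μ (ball x r) < ⊤)
    (S : ChristSystem M μ) (j : ℤ) (α : S.I j) : μ (S.Q j α) < ⊤ := by
  have hb : 0 < S.cBig * S.δ ^ j :=
    mul_pos (S.cSmall_pos.trans S.cSmall_lt_cBig) (zpow_pos S.δ_pos j)
  refine lt_of_le_of_lt (measure_mono ?_)
    (hball (S.center j α) (2 * (S.cBig * S.δ ^ j)) (by linarith)).2
  intro x hx
  have h := (Metric.edist_le_ediam_of_mem hx (center_mem S j α)).trans (S.diam_le j α)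
  rw [edist_dist, ENNReal.ofReal_le_ofReal_iff hb.le] at h
  rw [mem_ball]; linarith

lemma exists_anc (hball : ∀ (x : M) (r : ℝ), 0 < r → 0 < μ (ball x r) ∧ μ (ball x r) < ⊤)
    (S : ChristSystem M μ) {j ℓ : ℤ} (h : j ≤ ℓ) (β : S.I ℓ) : ∃ α : S.I j, S.Q ℓ β ⊆ S.Q j α := by
  by_contra! hno
  have : S.Q ℓ β ⊆ Set.univ \ ⋃ α : S.I j, S.Q j α := by
    intro x hx
    refine ⟨trivial, fun hx' => ?_⟩
    obtain ⟨α, hα⟩ := Set.mem_iUnion.1 hx'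
    rcases S.nested j ℓ h α β with h1 | h1
    · exact hno α h1
    · exact (Set.mem_empty_iff_false x).1 (h1 ▸ ⟨hx, hα⟩)
  have h0 := measure_mono_null this (S.cover j)
  exact (Q_pos hball S ℓ β).ne' h0

lemma cube_unique (S : ChristSystem M μ) {j : ℤ} {α β : S.I j} {x : M} (h1 : x ∈ S.Q j α)
    (h2 : x ∈ S.Q j β) : α = β := by
  by_contra hne
  exact (Set.mem_empty_iff_false x).1 (S.disjoint_Q j α β hne ▸ ⟨h1, h2⟩)

variable (S : ChristSystem M μ) (j₀ : ℕ)
    (w : (j : ℕ) → (t : S.I j) → SubIdx S j₀ j t → ℝ≥0∞)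
    (E : (j : ℕ) → (t : S.I j) → SubIdx S j₀ j t → Set M)
    (a : (j : ℕ) → (t : S.I j) → SubIdx S j₀ j t → ℂ)

lemma seqFunOn_eq (hE : ∀ j t ν, E j t ν ⊆ SubQ S j₀ j t ν) (j : ℕ) (x : M) (t : S.I j)
    (ν : SubIdx S j₀ j t) (hx : x ∈ SubQ S j₀ j t ν) :
    seqFunOn S j₀ w E a j x =
      w j t ν * (‖a j t ν‖₊ : ℝ≥0∞) * (E j t ν).indicator (fun _ => (1 : ℝ≥0∞)) x := by
  unfold seqFunOn
  rw [tsum_eq_single t, tsum_eq_single ν]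
  · intro ν' hne
    have : x ∉ E j t ν' := fun h => hne (Subtype.ext (cube_unique S (hE _ _ _ h) hx))
    simp [this]
  · intro t' hne
    refine ENNReal.tsum_eq_zero.2 fun ν' => ?_
    have : x ∉ E j t' ν' := fun h => hne (cube_unique S (ν'.2 (hE _ _ _ h)) (ν.2 hx))
    simp [this]

lemma seqFunOn_zero (j : ℕ) (x : M) (h : ∀ t ν, x ∉ E j t ν) :
    seqFunOn S j₀ w E a j x = 0 := by
  unfold seqFunOn
  simp [h]

lemma seqFunOn_cut (hE : ∀ j t ν, E j t ν ⊆ SubQ S j₀ j t ν) (j : ℕ) (x : M) :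
    seqFunOn S j₀ w E a j x = (⋃ t, ⋃ ν, E j t ν).indicator (seqFun S j₀ w a j) x := by
  by_cases hx : ∃ t ν, x ∈ E j t ν
  · obtain ⟨t, ν, h⟩ := hx
    have hu : x ∈ ⋃ t, ⋃ ν, E j t ν := Set.mem_iUnion.2 ⟨t, Set.mem_iUnion.2 ⟨ν, h⟩⟩
    rw [Set.indicator_of_mem hu, seqFun, seqFunOn_eq S j₀ w E a hE j x t ν (hE _ _ _ h),
      seqFunOn_eq S j₀ w _ a (fun _ _ _ => subset_rfl) j x t ν (hE _ _ _ h)]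
    simp [h, hE _ _ _ h]
  · push Not at hx
    rw [seqFunOn_zero S j₀ w E a j x hx, Set.indicator_of_notMem]
    simpa using hx

lemma seqFunOn_meas (hE : ∀ j t ν, MeasurableSet (E j t ν)) (j : ℕ) :
    Measurable (seqFunOn S j₀ w E a j) := by
  have := S.countable_I
  have : ∀ t : S.I j, Countable (SubIdx S j₀ j t) := fun t => by
    unfold SubIdx; infer_instance
  unfold seqFunOn
  refine Measurable.tsum fun t => Measurable.tsum fun ν => ?_
  exact (measurable_const.indicator (hE j t ν)).const_mul _

/-- Two points lie in a common cube of level `n + j₀`. -/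
def sameCube (n : ℕ) (x y : M) : Prop := ∃ β : S.I ((n : ℤ) + j₀), x ∈ S.Q _ β ∧ y ∈ S.Q _ β

lemma thick_cubes [BorelSpace M]
    (hball : ∀ (x : M) (r : ℝ), 0 < r → 0 < μ (ball x r) ∧ μ (ball x r) < ⊤)
    (ε : ℝ) (hε0 : 0 < ε) (hε1 : ε ≤ 1)
    (hEm : ∀ j t ν, MeasurableSet (E j t ν))
    (hE : ∀ j t ν, E j t ν ⊆ SubQ S j₀ j t ν)
    (hEε : ∀ j t ν, ENNReal.ofReal ε * μ (SubQ S j₀ j t ν) ≤ μ (E j t ν))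
    (k : ℤ) (α : S.I k) :
    Thick (μ.restrict (S.Q k α)) (sameCube S j₀)
      (fun n => if k.toNat ≤ n then ⋃ t, ⋃ ν, E n t ν else Set.univ) (ENNReal.ofReal ε)⁻¹ := by
  intro n φ hφ
  have := S.countable_I
  have hε : ENNReal.ofReal ε ≠ 0 := by simpa using hε0
  by_cases hn : k.toNat ≤ n
  swap
  · simp only [hn, if_false, Measure.restrict_univ]
    apply le_mul_of_one_le_left'
    rw [ENNReal.one_le_inv]
    simpa using hε1
  simp only [hn, if_true]
  set F := ⋃ t, ⋃ ν, E n t ν with hFdef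
  have hkn : k ≤ (n : ℤ) + j₀ := by have := Int.self_le_toNat k; omega
  have hQm : ∀ β : S.I ((n : ℤ) + j₀), MeasurableSet (S.Q _ β) :=
    fun β => (S.isOpen_Q _ β).measurableSet
  have : ∀ t : S.I n, Countable (SubIdx S j₀ n t) := fun t => by
    unfold SubIdx; infer_instance
  have hFm : MeasurableSet F :=
    MeasurableSet.iUnion fun t => MeasurableSet.iUnion fun ν => hEm n t ν
  have hdisj : Pairwise (Function.onFun Disjoint (fun β : S.I ((n : ℤ) + j₀) => S.Q _ β)) :=
    fun β γ h => Set.disjoint_iff_inter_eq_empty.2 (S.disjoint_Q _ β γ h)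
  have hcov : (μ.restrict (S.Q k α)).restrict (⋃ β : S.I ((n : ℤ) + j₀), S.Q _ β)
      = μ.restrict (S.Q k α) := by
    apply Measure.restrict_eq_self_of_ae_mem
    apply ae_restrict_of_ae
    rw [ae_iff]
    convert S.cover ((n : ℤ) + j₀) using 2
    ext x; simp
  have key : ∀ β : S.I ((n : ℤ) + j₀), ∫⁻ x in S.Q _ β, φ x ∂(μ.restrict (S.Q k α)) ≤
      (ENNReal.ofReal ε)⁻¹ * ∫⁻ x in S.Q _ β ∩ F, φ x ∂(μ.restrict (S.Q k α)) := by
    intro β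
    rcases S.nested k _ hkn α β with h | h
    swap
    · rw [Measure.restrict_restrict (hQm β), h]; simp
    obtain ⟨t, ht⟩ := exists_anc hball S (show (n : ℤ) ≤ (n : ℤ) + j₀ by omega) β
    let ν : SubIdx S j₀ n t := ⟨β, ht⟩
    have hEQ : E n t ν ⊆ S.Q _ β := hE n t ν
    have hEF : E n t ν ⊆ (S.Q _ β ∩ F) ∩ S.Q k α := fun x hx =>
      ⟨⟨hEQ hx, Set.mem_iUnion.2 ⟨t, Set.mem_iUnion.2 ⟨ν, hx⟩⟩⟩, h (hEQ hx)⟩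
    have hv : ∀ x ∈ S.Q _ β, φ x = φ (S.center _ β) := fun x hx =>
      hφ _ _ ⟨β, hx, center_mem S _ β⟩
    rw [Measure.restrict_restrict (hQm β), Measure.restrict_restrict ((hQm β).inter hFm),
      Set.inter_eq_left.2 h]
    calc ∫⁻ x in S.Q _ β, φ x ∂μ = ∫⁻ x in S.Q _ β, φ (S.center _ β) ∂μ :=
          setLIntegral_congr_fun (hQm β) hv
      _ = φ (S.center _ β) * μ (S.Q _ β) := by simp
      _ = (ENNReal.ofReal ε)⁻¹ * (φ (S.center _ β) * (ENNReal.ofReal ε * μ (S.Q _ β))) := by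
          rw [mul_left_comm (φ _), ← mul_assoc (ENNReal.ofReal ε)⁻¹,
            ENNReal.inv_mul_cancel hε (by simp), one_mul]
      _ ≤ (ENNReal.ofReal ε)⁻¹ * (φ (S.center _ β) * μ (E n t ν)) := by
          gcongr; exact hEε n t ν
      _ = (ENNReal.ofReal ε)⁻¹ * ∫⁻ x in E n t ν, φ x ∂μ := by
          rw [setLIntegral_congr_fun (g := fun _ => φ (S.center _ β)) (hEm n t ν)
            (fun x hx => hv x (hEQ hx))]
          simp
      _ ≤ _ := by
          exact mul_le_mul' le_rfl (lintegral_mono_set hEF)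
  calc ∫⁻ x, φ x ∂(μ.restrict (S.Q k α))
      = ∫⁻ x in ⋃ β : S.I ((n : ℤ) + j₀), S.Q _ β, φ x ∂(μ.restrict (S.Q k α)) := by rw [hcov]
    _ = ∑' β : S.I ((n : ℤ) + j₀), ∫⁻ x in S.Q _ β, φ x ∂(μ.restrict (S.Q k α)) :=
        lintegral_iUnion hQm hdisj _
    _ ≤ ∑' β : S.I ((n : ℤ) + j₀), (ENNReal.ofReal ε)⁻¹ *
        ∫⁻ x in S.Q _ β ∩ F, φ x ∂(μ.restrict (S.Q k α)) := ENNReal.tsum_le_tsum key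
    _ = (ENNReal.ofReal ε)⁻¹ * ∫⁻ x in ⋃ β : S.I ((n : ℤ) + j₀), (S.Q _ β ∩ F), φ x
          ∂(μ.restrict (S.Q k α)) := by
        rw [ENNReal.tsum_mul_left, lintegral_iUnion (fun β => (hQm β).inter hFm)]
        exact fun β γ h => (hdisj h).mono Set.inter_subset_left Set.inter_subset_left
    _ ≤ _ := by
        exact mul_le_mul' le_rfl
          (lintegral_mono_set (Set.iUnion_subset fun β => Set.inter_subset_right))

lemma seqLq_mono (q : ℝ≥0∞) {f g : ℕ → ℝ≥0∞} (h : ∀ j, f j ≤ g j) : seqLq q f ≤ seqLq q g := by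
  unfold seqLq
  split_ifs
  · exact iSup_mono h
  · refine ENNReal.rpow_le_rpow (ENNReal.tsum_le_tsum fun j => ?_) (by positivity)
    exact ENNReal.rpow_le_rpow (h j) ENNReal.toReal_nonneg

lemma fNorm_mono (p q : ℝ≥0∞) (hpt : p ≠ ⊤) (τ : ℝ) {f g : ℕ → M → ℝ≥0∞}
    (h : ∀ j x, f j x ≤ g j x) : fNorm S p q τ f ≤ fNorm S p q τ g := by
  unfold fNorm
  refine iSup_mono fun k => iSup_mono fun α => mul_le_mul' le_rfl ?_
  simp only [lpOn, hpt, if_false]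
  refine ENNReal.rpow_le_rpow (lintegral_mono fun x => ?_) (by positivity)
  refine ENNReal.rpow_le_rpow (seqLq_mono q fun j => ?_) ENNReal.toReal_nonneg
  split_ifs
  · exact h j x
  · exact le_rfl

lemma upper_bound (hE : ∀ j t ν, E j t ν ⊆ SubQ S j₀ j t ν) (p q : ℝ≥0∞) (hpt : p ≠ ⊤) (τ : ℝ) :
    fNorm S p q τ (seqFunOn S j₀ w E a) ≤ fNorm S p q τ (seqFun S j₀ w a) := by
  refine fNorm_mono S p q hpt τ fun j x => ?_
  rw [seqFunOn_cut S j₀ w E a hE]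
  exact Set.indicator_le_self _ _ _

lemma lower_bound [BorelSpace M]
    (hball : ∀ (x : M) (r : ℝ), 0 < r → 0 < μ (ball x r) ∧ μ (ball x r) < ⊤)
    (ε : ℝ) (hε0 : 0 < ε) (hε1 : ε ≤ 1) (τ : ℝ)
    (p q : ℝ≥0∞) (hp0 : 0 < p) (hpt : p ≠ ⊤) (hq : 0 < q) :
    ∃ C : ℝ, 1 ≤ C ∧
      ∀ (w : (j : ℕ) → (t : S.I j) → SubIdx S j₀ j t → ℝ≥0∞)
        (E : (j : ℕ) → (t : S.I j) → SubIdx S j₀ j t → Set M),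
        (∀ j t ν, MeasurableSet (E j t ν)) →
        (∀ j t ν, E j t ν ⊆ SubQ S j₀ j t ν) →
        (∀ j t ν, ENNReal.ofReal ε * μ (SubQ S j₀ j t ν) ≤ μ (E j t ν)) →
        ∀ a : (j : ℕ) → (t : S.I j) → SubIdx S j₀ j t → ℂ,
          fNorm S p q τ (seqFun S j₀ w a) ≤
              ENNReal.ofReal C * fNorm S p q τ (seqFunOn S j₀ w E a) := by
  have hp : 0 < p.toReal := ENNReal.toReal_pos hp0.ne' hpt
  have hε : ENNReal.ofReal ε ≠ 0 := by simpa using hε0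
  obtain ⟨C, hC, hmain⟩ := abs_main p q (ENNReal.ofReal ε)⁻¹ hp0 hpt hq (by simpa using hε)
  have hCp : C ^ (1 / p.toReal) ≠ ⊤ := ENNReal.rpow_ne_top_of_nonneg (by positivity) hC
  refine ⟨max 1 (C ^ (1 / p.toReal)).toReal, le_max_left _ _, ?_⟩
  intro w E hEm hE hEε a
  have hCC : C ^ (1 / p.toReal) ≤ ENNReal.ofReal (max 1 (C ^ (1 / p.toReal)).toReal) := by
    rw [← ENNReal.ofReal_toReal hCp]
    exact ENNReal.ofReal_le_ofReal (by simp)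
  have := S.countable_I
  unfold fNorm
  refine iSup_le fun k => iSup_le fun α => ?_
  set G := fun (n : ℕ) (x : M) => if k.toNat ≤ n then seqFun S j₀ w a n x else 0 with hG
  have hcut : ∀ n x, cut (fun n => if k.toNat ≤ n then ⋃ t, ⋃ ν, E n t ν else Set.univ) G n x
      = if k.toNat ≤ n then seqFunOn S j₀ w E a n x else 0 := by
    intro n x
    by_cases hn : k.toNat ≤ n
    · simp only [cut, hn, if_true, hG]
      rw [seqFunOn_cut S j₀ w E a hE]
    · simp only [cut, hn, if_false, hG, Set.indicator_univ]
  have hle : lpOn μ p (S.Q k α) (fun x => seqLq q (fun j => G j x)) ≤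
      ENNReal.ofReal (max 1 (C ^ (1 / p.toReal)).toReal) *
      lpOn μ p (S.Q k α) (fun x => seqLq q
        (fun j => if k.toNat ≤ j then seqFunOn S j₀ w E a j x else 0)) := by
    simp only [lpOn, hpt, if_false]
    refine le_trans ?_ (mul_le_mul' hCC le_rfl)
    rw [← ENNReal.mul_rpow_of_nonneg _ _ (by positivity)]
    refine ENNReal.rpow_le_rpow ?_ (by positivity)
    have : IsFiniteMeasure (μ.restrict (S.Q k α)) :=
      ⟨by simpa using Q_fin hball S k α⟩
    have := hmain (μ.restrict (S.Q k α)) (sameCube S j₀)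
      (fun n => if k.toNat ≤ n then ⋃ t, ⋃ ν, E n t ν else Set.univ) ?_
      (thick_cubes S j₀ E hball ε hε0 hε1 hEm hE hEε k α) ?_ G ?_ ?_
    · simpa only [hcut] using this
    · intro n
      split_ifs
      · have : ∀ t : S.I n, Countable (SubIdx S j₀ n t) := fun t => by
          unfold SubIdx; infer_instance
        exact MeasurableSet.iUnion fun t => MeasurableSet.iUnion fun ν => hEm n t ν
      · exact MeasurableSet.univ
    · rintro i n x y hin ⟨β, hx, hy⟩
      obtain ⟨γ, hγ⟩ := exists_anc hball S (show (i : ℤ) + j₀ ≤ (n : ℤ) + j₀ by omega) β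
      exact ⟨γ, hγ hx, hγ hy⟩
    · intro n
      simp only [hG]
      split_ifs
      · exact seqFunOn_meas S j₀ w _ a (fun j t ν => (S.isOpen_Q _ _).measurableSet) n
      · exact measurable_const
    · rintro n x y ⟨β, hx, hy⟩
      obtain ⟨t, ht⟩ := exists_anc hball S (show (n : ℤ) ≤ (n : ℤ) + j₀ by omega) β
      have h := fun z hz => seqFunOn_eq S j₀ w _ a (fun _ _ _ => subset_rfl) n z t ⟨β, ht⟩ hz
      have hx' : x ∈ SubQ S j₀ n t ⟨β, ht⟩ := hx
      have hy' : y ∈ SubQ S j₀ n t ⟨β, ht⟩ := hy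
      simp only [hG, seqFun]
      rw [h x hx', h y hy', Set.indicator_of_mem hx', Set.indicator_of_mem hy']
  calc _ ≤ μ (S.Q k α) ^ (-τ) * (ENNReal.ofReal (max 1 (C ^ (1 / p.toReal)).toReal) *
      lpOn μ p (S.Q k α) (fun x => seqLq q
        (fun j => if k.toNat ≤ j then seqFunOn S j₀ w E a j x else 0))) := by
        gcongr
    _ = ENNReal.ofReal (max 1 (C ^ (1 / p.toReal)).toReal) * (μ (S.Q k α) ^ (-τ) *
      lpOn μ p (S.Q k α) (fun x => seqLq q
        (fun j => if k.toNat ≤ j then seqFunOn S j₀ w E a j x else 0))) := by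
        rw [mul_left_comm]
    _ ≤ _ := by
        gcongr
        exact le_iSup₂ (f := fun (k : ℤ) (α : S.I k) => μ (S.Q k α) ^ (-τ) *
          lpOn μ p (S.Q k α) (fun x => seqLq q
            (fun j => if k.toNat ≤ j then seqFunOn S j₀ w E a j x else 0))) k α

end concretePart

theorem stmt_16 {M : Type*} [MetricSpace M] [MeasurableSpace M] [BorelSpace M]
    (μ : Measure M)
    (hball : ∀ (x : M) (r : ℝ), 0 < r → 0 < μ (ball x r) ∧ μ (ball x r) < ⊤)
    (K d : ℝ) (hK : 1 < K) (hd : d = Real.logb 2 K)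
    (hdoub : ∀ (x : M) (r lam : ℝ), 0 < r → 1 ≤ lam →
      μ (ball x (lam * r)) ≤ ENNReal.ofReal (K * lam ^ d) * μ (ball x r))
    (S : ChristSystem M μ) (j₀ : ℕ)
    (hfin : ∀ (j : ℕ) (t : S.I j), Finite (SubIdx S j₀ j t))
    (ε : ℝ) (hε0 : 0 < ε) (hε1 : ε ≤ 1)
    (s τ : ℝ) (hτ : 0 ≤ τ)
    (p q : ℝ≥0∞) (hp0 : 0 < p) (hpt : p ≠ ⊤) (hq : 0 < q) :
    ∃ C : ℝ, 1 ≤ C ∧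
      ∀ E : (j : ℕ) → (t : S.I j) → SubIdx S j₀ j t → Set M,
        (∀ (j : ℕ) (t : S.I j) (ν : SubIdx S j₀ j t), MeasurableSet (E j t ν)) →
        (∀ (j : ℕ) (t : S.I j) (ν : SubIdx S j₀ j t), E j t ν ⊆ SubQ S j₀ j t ν) →
        (∀ (j : ℕ) (t : S.I j) (ν : SubIdx S j₀ j t),
          ENNReal.ofReal ε * μ (SubQ S j₀ j t ν) ≤ μ (E j t ν)) →
        ∀ a : (j : ℕ) → (t : S.I j) → SubIdx S j₀ j t → ℂ,
          (fNorm S p q τ (seqFun S j₀ (deltaWeight S j₀ s) a) ≤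
              ENNReal.ofReal C * fNorm S p q τ (seqFunOn S j₀ (deltaWeight S j₀ s) E a)) ∧
          (fNorm S p q τ (seqFunOn S j₀ (deltaWeight S j₀ s) E a) ≤
              fNorm S p q τ (seqFun S j₀ (deltaWeight S j₀ s) a)) ∧
          (fNorm S p q τ (seqFun S j₀ (tildeWeight S j₀ d s) a) ≤
              ENNReal.ofReal C * fNorm S p q τ (seqFunOn S j₀ (tildeWeight S j₀ d s) E a)) ∧
          (fNorm S p q τ (seqFunOn S j₀ (tildeWeight S j₀ d s) E a) ≤
              fNorm S p q τ (seqFun S j₀ (tildeWeight S j₀ d s) a)) := by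
  obtain ⟨C, hC, h⟩ := lower_bound S j₀ hball ε hε0 hε1 τ p q hp0 hpt hq
  refine ⟨C, hC, fun E hEm hE hEε a => ⟨h _ E hEm hE hEε a, ?_, h _ E hEm hE hEε a, ?_⟩⟩
  · exact upper_bound S j₀ _ E a hE p q hpt τ
  · exact upper_bound S j₀ _ E a hE p q hpt τ
end
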